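/- arXiv:1510.06548 — 2 statements merged into one kernel-verified Lean document; each statement's English description precedes it below -/
import Mathlib

section
/- Let a : ℝ → ℝ be a C^∞, 2π-periodic, real-valued function. Then Z₁(a) = (2/3)·∑_{n=2}^∞ (n³ − n)·|â(n)|², where the series on the right converges. -/
open MeasureTheory Real

noncomputable section

/-- The `k`-th Fourier coefficient of a `2π`-periodic function `u : ℝ → ℂ`:
`û(k) = (1/2π) ∫₀^{2π} u(θ) e^{-ikθ} dθ`. -/
def fCoef (u : ℝ → ℂ) (k : ℤ) : ℂ :=
  (2 * Real.pi)⁻¹ * ∫ θ in (0:ℝ)..(2 * Real.pi), u θ * Complex.exp (-Complex.I * k * θ)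

/-- `prodPoly m j n = n(n+j₁)(n+j₁+j₂)⋯(n+j₁+⋯+j_{m-1})`. -/
def prodPoly (m : ℕ) (j : Fin m → ℤ) (n : ℤ) : ℤ :=
  ∏ i : Fin m, (n + ∑ l ∈ Finset.Iio i, j l)

/-- The coefficient `N_{j₁…j_m} = ∑ₙ (|n(n+j₁)⋯(n+j₁+⋯+j_{m-1})| - n(n+j₁)⋯(n+j₁+⋯+j_{m-1}))`;
only finitely many summands are nonzero. -/
def Ncoef (m : ℕ) (j : Fin m → ℤ) : ℝ :=
  ∑' n : ℤ, ((|prodPoly m j n| - prodPoly m j n : ℤ) : ℝ)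

/-- A term of the series defining the zeta-invariant `Z_k(a)`:
`N_{j₁…j_{2k}} â(j₁)⋯â(j_{2k})` for `j₁+⋯+j_{2k} = 0`. -/
def zetaTerm (k : ℕ) (a : ℝ → ℝ) (j : {j : Fin (2 * k) → ℤ // ∑ i, j i = 0}) : ℂ :=
  (Ncoef (2 * k) j.val : ℂ) * ∏ i, fCoef (fun θ => (a θ : ℂ)) (j.val i)

/-- The zeta-invariant `Z_k(a) = ∑_{j₁+⋯+j_{2k}=0} N_{j₁…j_{2k}} â(j₁)⋯â(j_{2k})`. -/
def ZetaInv (k : ℕ) (a : ℝ → ℝ) : ℂ :=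
  ∑' j : {j : Fin (2 * k) → ℤ // ∑ i, j i = 0}, zetaTerm k a j

/- Integrating by parts `p` times turns `u` into its `p`-th derivative and `û(k)` into
`(ik)^p û(k)`, so Bessel's inequality for the `p`-th derivative bounds `∑ |k|^{2p} |û(k)|²`; for
`p = 2` this dominates `∑ (n³ - n) |â(n)|²`. In `Z₁` only the pairs `(j, -j)` occur. Since
`n(n + j)` is negative exactly for `n` strictly between `-j` and `0`, the coefficient `N_{j,-j}` is
`2 ∑_{0 < m < |j|} m(|j| - m) = (|j|³ - |j|)/3`, while `â(j) â(-j) = |â(j)|²` because `a` is real.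
Their product vanishes for `|j| ≤ 1` and is even in `j`, which leaves twice the sum over `j ≥ 2`. -/

section FourierCoefficients

open scoped ComplexConjugate

theorem fCoef_eq_fourierCoeffOn (u : ℝ → ℂ) (k : ℤ) :
    fCoef u k = fourierCoeffOn Real.two_pi_pos u k := by
  rw [fourierCoeffOn_eq_integral, fCoef, sub_zero, Complex.real_smul]
  congr 1
  · push_cast; ring
  · refine intervalIntegral.integral_congr fun θ _ => ?_
    simp only [fourier_coe_apply, smul_eq_mul]
    rw [mul_comm]
    congr 2
    have : (Real.pi : ℂ) ≠ 0 := by exact_mod_cast Real.pi_ne_zero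
    push_cast
    field_simp

theorem fCoef_conj (u : ℝ → ℂ) (k : ℤ) :
    fCoef (fun θ => conj (u θ)) k = conj (fCoef u (-k)) := by
  simp only [fCoef, map_mul, Complex.conj_ofReal, ← intervalIntegral.intervalIntegral_conj,
    ← Complex.exp_conj]
  simp

theorem fCoef_ofReal_neg (a : ℝ → ℝ) (k : ℤ) :
    fCoef (fun θ => (a θ : ℂ)) (-k) = conj (fCoef (fun θ => (a θ : ℂ)) k) := by
  simpa using fCoef_conj (fun θ => (a θ : ℂ)) (-k)

theorem fCoef_of_hasDerivAt {u u' : ℝ → ℂ}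
    (hu : ∀ θ ∈ Set.uIcc 0 (2 * Real.pi), HasDerivAt u (u' θ) θ)
    (hu' : IntervalIntegrable u' volume 0 (2 * Real.pi)) (hend : u (2 * Real.pi) = u 0) (k : ℤ) :
    fCoef u' k = Complex.I * k * fCoef u k := by
  rcases eq_or_ne k 0 with rfl | hk
  · simp [fCoef, intervalIntegral.integral_eq_sub_of_hasDerivAt hu hu', hend]
  · have hk' : (k : ℂ) ≠ 0 := by exact_mod_cast hk
    have hpi : (Real.pi : ℂ) ≠ 0 := by exact_mod_cast Real.pi_ne_zero
    rw [fCoef_eq_fourierCoeffOn, fCoef_eq_fourierCoeffOn,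
      fourierCoeffOn_of_hasDerivAt Real.two_pi_pos hk hu hu', hend]
    push_cast
    field_simp
    ring

theorem periodic_iteratedDeriv {𝕜 F : Type*} [NontriviallyNormedField 𝕜] [NormedAddCommGroup F]
    [NormedSpace 𝕜 F] {u : 𝕜 → F} {T : 𝕜} (hu : Function.Periodic u T) (p : ℕ) :
    Function.Periodic (iteratedDeriv p u) T := fun x => by
  rw [← congrFun (iteratedDeriv_comp_add_const p u T) x, hu.funext]

theorem fCoef_iteratedDeriv {u : ℝ → ℂ} {p : ℕ} (hu : ContDiff ℝ p u)
    (hper : Function.Periodic u (2 * Real.pi)) (k : ℤ) :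
    fCoef (iteratedDeriv p u) k = (Complex.I * k) ^ p * fCoef u k := by
  induction p with
  | zero => simp
  | succ p ih =>
    have hderiv (θ : ℝ) : HasDerivAt (iteratedDeriv p u) (iteratedDeriv (p + 1) u θ) θ := by
      rw [iteratedDeriv_succ]
      exact (hu.differentiable_iteratedDeriv p (by norm_cast; lia) θ).hasDerivAt
    have hcont : Continuous (iteratedDeriv (p + 1) u) := hu.continuous_iteratedDeriv _ le_rfl
    rw [fCoef_of_hasDerivAt (fun θ _ => hderiv θ) (hcont.intervalIntegrable _ _)
      (periodic_iteratedDeriv hper p).eq, ih (hu.of_le (by norm_cast; lia))]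
    ring

theorem summable_norm_fCoef_sq {u : ℝ → ℂ}
    (hu : MemLp u 2 (volume.restrict (Set.Ioc 0 (2 * Real.pi)))) :
    Summable fun k : ℤ => ‖fCoef u k‖ ^ 2 := by
  simpa only [fCoef_eq_fourierCoeffOn] using
    (hasSum_sq_fourierCoeffOn Real.two_pi_pos hu).summable

theorem summable_abs_pow_mul_norm_fCoef_sq {u : ℝ → ℂ} {p : ℕ} (hu : ContDiff ℝ p u)
    (hper : Function.Periodic u (2 * Real.pi)) :
    Summable fun k : ℤ => (|(k : ℝ)| ^ p * ‖fCoef u k‖) ^ 2 := by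
  have hcont : Continuous (iteratedDeriv p u) := hu.continuous_iteratedDeriv p le_rfl
  have hL2 : MemLp (iteratedDeriv p u) 2 (volume.restrict (Set.Ioc 0 (2 * Real.pi))) := by
    rw [memLp_two_iff_integrable_sq_norm hcont.aestronglyMeasurable]
    exact (hcont.norm.pow 2).integrableOn_Ioc
  simpa [fCoef_iteratedDeriv hu hper, Complex.norm_intCast] using summable_norm_fCoef_sq hL2

theorem summable_cube_sub_self_mul_norm_fCoef_sq {u : ℝ → ℂ} (hu : ContDiff ℝ 2 u)
    (hper : Function.Periodic u (2 * Real.pi)) :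
    Summable fun n : ℕ =>
      (((n : ℝ) + 2) ^ 3 - ((n : ℝ) + 2)) * ‖fCoef u ((n : ℤ) + 2)‖ ^ 2 := by
  have hinj : Function.Injective fun n : ℕ => (n : ℤ) + 2 := fun m n h => by simpa using h
  have hx (n : ℕ) : (1 : ℝ) ≤ n + 2 := by linarith [n.cast_nonneg (α := ℝ)]
  refine ((summable_abs_pow_mul_norm_fCoef_sq hu hper).comp_injective hinj).of_nonneg_of_le
    (fun n => ?_) fun n => ?_
  · exact mul_nonneg (sub_nonneg.2 (le_self_pow₀ (hx n) (by norm_num))) (sq_nonneg _)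
  · have hpow : ((n : ℝ) + 2) ^ 3 ≤ (n + 2) ^ (2 * 2) := pow_le_pow_right₀ (hx n) (by norm_num)
    simp only [Function.comp_apply, mul_pow, ← pow_mul, Int.cast_add, Int.cast_natCast,
      Int.cast_ofNat, Even.pow_abs (n := 2 * 2) (by decide)]
    gcongr
    linarith [hx n]

end FourierCoefficients

theorem six_mul_sum_range_mul_sub {R : Type*} [CommRing R] (x : R) (n : ℕ) :
    6 * ∑ m ∈ Finset.range n, (m : R) * (x - m) = n * (n - 1) * (3 * x - 2 * n + 1) := by
  induction n with
  | zero => simp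
  | succ n ih => rw [Finset.sum_range_succ, mul_add, ih]; push_cast; ring

theorem tsum_abs_sub_self_mul_add_natCast (J : ℕ) :
    ∑' n : ℤ, ((|n * (n + J)| - n * (n + J) : ℤ) : ℝ) = ((J : ℝ) ^ 3 - J) / 3 := by
  have hzero : ∀ n ∉ (Finset.range J).image (fun m : ℕ => -(m : ℤ)),
      ((|n * (n + J)| - n * (n + J) : ℤ) : ℝ) = 0 := by
    intro n hn
    have hsign : 0 ≤ n ∨ n + J ≤ 0 := by
      by_contra! h
      exact hn (Finset.mem_image.2 ⟨n.natAbs, Finset.mem_range.2 (by lia), by lia⟩)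
    have hnonneg : 0 ≤ n * (n + J) := by
      rcases hsign with h | h
      · positivity
      · exact mul_nonneg_of_nonpos_of_nonpos (by lia) h
    rw [abs_of_nonneg hnonneg, sub_self, Int.cast_zero]
  have hterm : ∀ m ∈ Finset.range J,
      ((|-(m : ℤ) * (-m + J)| - -(m : ℤ) * (-m + J) : ℤ) : ℝ) = 2 * (m * (J - m)) := by
    intro m hm
    have hmJ : (0 : ℤ) ≤ -m + J := by have := Finset.mem_range.1 hm; lia
    rw [abs_of_nonpos (mul_nonpos_of_nonpos_of_nonneg (by lia) hmJ)]
    push_cast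
    ring
  rw [tsum_eq_sum hzero, Finset.sum_image (by simp), Finset.sum_congr rfl hterm,
    ← Finset.mul_sum]
  linear_combination six_mul_sum_range_mul_sub (J : ℝ) J / 3

theorem tsum_abs_sub_self_mul_add (j : ℤ) :
    ∑' n : ℤ, ((|n * (n + j)| - n * (n + j) : ℤ) : ℝ) = (|(j : ℝ)| ^ 3 - |(j : ℝ)|) / 3 := by
  obtain ⟨J, rfl | rfl⟩ := j.eq_nat_or_neg
  · simpa using tsum_abs_sub_self_mul_add_natCast J
  · have hreflect (n : ℤ) : -n * (-n + -J) = n * (n + J) := by ring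
    rw [← (Equiv.neg ℤ).tsum_eq]
    simpa [hreflect] using tsum_abs_sub_self_mul_add_natCast J

theorem prodPoly_two (j : Fin 2 → ℤ) (n : ℤ) : prodPoly 2 j n = n * (n + j 0) := by
  have hIio : Finset.Iio (1 : Fin 2) = {0} := rfl
  have hIio_zero : Finset.Iio (0 : Fin 2) = ∅ := rfl
  simp [prodPoly, Fin.prod_univ_two, hIio, hIio_zero]

theorem Ncoef_two (j : Fin 2 → ℤ) : Ncoef 2 j = (|(j 0 : ℝ)| ^ 3 - |(j 0 : ℝ)|) / 3 := by
  simp only [Ncoef, prodPoly_two, tsum_abs_sub_self_mul_add]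

/-- The parametrization `j ↦ (j, -j)` of the pairs with sum zero, which index the terms of `Z₁`. -/
def zeroSumPairEquiv (G : Type*) [AddCommGroup G] : G ≃ {j : Fin 2 → G // ∑ i, j i = 0} where
  toFun j := ⟨![j, -j], by simp⟩
  invFun j := j.1 0
  left_inv _ := rfl
  right_inv := by
    rintro ⟨j, hj⟩
    have hj1 : -j 0 = j 1 := neg_eq_of_add_eq_zero_right (by rwa [Fin.sum_univ_two] at hj)
    ext i
    fin_cases i
    · rfl
    · exact hj1

theorem zetaTerm_one (a : ℝ → ℝ) (j : ℤ) :
    zetaTerm 1 a (zeroSumPairEquiv ℤ j) =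
      (((|(j : ℝ)| ^ 3 - |(j : ℝ)|) / 3 * ‖fCoef (fun θ => (a θ : ℂ)) j‖ ^ 2 : ℝ) : ℂ) := by
  have hprod : ∏ i : Fin 2, fCoef (fun θ => (a θ : ℂ)) ((zeroSumPairEquiv ℤ j).1 i) =
      (‖fCoef (fun θ => (a θ : ℂ)) j‖ : ℂ) ^ 2 := by
    rw [Fin.prod_univ_two, ← Complex.mul_conj', ← fCoef_ofReal_neg]
    rfl
  have hN : Ncoef 2 (zeroSumPairEquiv ℤ j).1 = (|(j : ℝ)| ^ 3 - |(j : ℝ)|) / 3 := Ncoef_two _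
  rw [Complex.ofReal_mul, Complex.ofReal_pow, ← hN, ← hprod]
  rfl

theorem hasSum_int_of_even_of_zero_one {M : Type*} [AddCommMonoid M] [TopologicalSpace M]
    [ContinuousAdd M] {f : ℤ → M} {s : M} (hf : f.Even) (h0 : f 0 = 0) (h1 : f 1 = 0)
    (h : HasSum (fun n : ℕ => f (n + 2)) s) : HasSum f (s + s) := by
  have hpos : HasSum (fun n : ℕ => f (n + 1)) s := by
    simpa [h1] using HasSum.zero_add (f := fun n : ℕ => f (n + 1)) (by simpa [add_assoc] using h)
  simpa [h0] using hpos.of_add_one_of_neg_add_one (by simpa only [hf _] using hpos)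

theorem hasSum_zetaTerm_one {a : ℝ → ℝ} {s : ℝ}
    (h : HasSum (fun n : ℕ => (((n : ℝ) + 2) ^ 3 - ((n : ℝ) + 2)) *
      ‖fCoef (fun θ => (a θ : ℂ)) ((n : ℤ) + 2)‖ ^ 2) s) :
    HasSum (zetaTerm 1 a) ((2 / 3 * s : ℝ) : ℂ) := by
  set g : ℤ → ℝ := fun j =>
    (|(j : ℝ)| ^ 3 - |(j : ℝ)|) / 3 * ‖fCoef (fun θ => (a θ : ℂ)) j‖ ^ 2 with hg
  have hg_even : g.Even := fun j => by
    simp only [hg, fCoef_ofReal_neg, RCLike.norm_conj, Int.cast_neg, abs_neg]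
  have hg_nat : HasSum (fun n : ℕ => g (n + 2)) (1 / 3 * s) := by
    convert! h.mul_left (1 / 3) using 2 with n
    have habs : |(((n : ℤ) + 2 : ℤ) : ℝ)| = n + 2 := by
      push_cast
      exact abs_of_nonneg (by positivity)
    simp only [hg, habs]
    ring
  have hg_int : HasSum g (2 / 3 * s) := by
    convert! hasSum_int_of_even_of_zero_one hg_even (by simp [hg]) (by simp [hg]) hg_nat using 1
    ring
  rw [← (zeroSumPairEquiv ℤ).hasSum_iff]
  exact (Complex.hasSum_ofReal.2 hg_int).congr_fun (zetaTerm_one a)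

theorem zetaInv_one_formula_general
    (a : ℝ → ℝ) (ha : ContDiff ℝ 2 a) (haper : Function.Periodic a (2 * Real.pi)) :
    Summable (fun n : ℕ =>
      (((n : ℝ) + 2) ^ 3 - ((n : ℝ) + 2)) *
        ‖fCoef (fun θ => (a θ : ℂ)) ((n : ℤ) + 2)‖ ^ 2) ∧
    HasSum (zetaTerm 1 a)
      (((2 / 3 : ℝ) * ∑' n : ℕ,
        (((n : ℝ) + 2) ^ 3 - ((n : ℝ) + 2)) *
          ‖fCoef (fun θ => (a θ : ℂ)) ((n : ℤ) + 2)‖ ^ 2 : ℝ) : ℂ) := by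
  have hs := summable_cube_sub_self_mul_norm_fCoef_sq (Complex.ofRealCLM.contDiff.comp ha)
    (haper.comp Complex.ofReal)
  exact ⟨hs, hasSum_zetaTerm_one hs.hasSum⟩

/-- **Edward's formula (3.4) of the paper.** For a smooth `2π`-periodic real-valued `a`,
`Z₁(a) = (2/3) ∑_{n≥2} (n³ - n) |â(n)|²`, the series on the right converging. -/
theorem zetaInv_one_formula
    (a : ℝ → ℝ) (ha : ContDiff ℝ (⊤ : ℕ∞) a) (haper : Function.Periodic a (2 * Real.pi)) :
    Summable (fun n : ℕ =>
      (((n : ℝ) + 2) ^ 3 - ((n : ℝ) + 2)) *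
        ‖fCoef (fun θ => (a θ : ℂ)) ((n : ℤ) + 2)‖ ^ 2) ∧
    ZetaInv 1 a =
      (((2 / 3 : ℝ) * ∑' n : ℕ,
        (((n : ℝ) + 2) ^ 3 - ((n : ℝ) + 2)) *
          ‖fCoef (fun θ => (a θ : ℂ)) ((n : ℤ) + 2)‖ ^ 2 : ℝ) : ℂ) := by
  exact (zetaInv_one_formula_general a (ha.of_le (by norm_cast)) haper).imp_right HasSum.tsum_eq
end
end

section
/- Let a : ℝ → ℝ be a C^∞, 2π-periodic, strictly positive function normalized so that ∫₀^{2π} a(θ)^{−1}dθ = 2π, let B(θ) = ∫₀^θ a(t)^{−1}dt and ψ(θ) = e^{iB(θ)}. If ψ̂(k) ≠ 0 for some integer k < 0 (equivalently, a is not conformally equivalent to the constant function 1), then for every α > 0 there exists a constant C > 0 such that Z_k(a) ≥ C·e^{αk} for every integer k ≥ 1. -/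
open MeasureTheory Real

noncomputable section

/-- `B(θ) = ∫₀^θ a(t)⁻¹ dt`. -/
def Bfun (a : ℝ → ℝ) (θ : ℝ) : ℝ := ∫ t in (0:ℝ)..θ, (a t)⁻¹

/-!
Let `D = -i d/dθ`. Expanding `(a|D|)^{2k}` and `(aD)^{2k}` into paths of frequencies shows that
`Z_k(a)` is the trace of `(a|D|)^{2k} - (aD)^{2k}`. Since `aD ψ^l = l ψ^l`, and since the families
`ψ^l` and `ψ^l / a` are biorthogonal and complete, evaluating this trace along them gives
`Z_k(a) = ∑_l (‖R^k (ψ^l / √a)‖² - l^{2k})`, where `R = √a |D| √a` is symmetric and `ψ^l / √a` is a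
unit vector. By log-convexity, `‖R^k (ψ^l / √a)‖ ≥ ⟨|D| ψ^l, ψ^l⟩^k`, while
`⟨|D| ψ^l, ψ^l⟩ ≥ |⟨D ψ^l, ψ^l⟩| = |l|`. Hence every summand is nonnegative, and the `l`-th one
grows at least like `l^{2k}` as soon as `l > 0` and `ψ^l` has a negative frequency.

To find such `l` of arbitrary size, let `Θ` be the inverse of `B`. Up to a nonzero factor, the
`(-m)`-th coefficient of `ψ^l` is the `(-l)`-th coefficient of `e^{imΘ}`, and the powers of a
function with a negative frequency have arbitrarily low frequencies.
-/

open scoped ComplexConjugate InnerProductSpace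

/-! ### Powers of symmetric operators -/

lemma pow_le_of_sq_le_mul {b : ℕ → ℝ} (hb : ∀ i, 0 ≤ b i) (hb₀ : b 0 = 1)
    (hlog : ∀ i, b (i + 1) ^ 2 ≤ b i * b (i + 2)) (k : ℕ) : b 1 ^ k ≤ b k := by
  rcases (hb 1).eq_or_lt with h₁ | h₁
  · cases k with
    | zero => simp [hb₀]
    | succ k => simpa [← h₁] using hb (k + 1)
  have ratio (i : ℕ) : 0 < b i ∧ b 1 * b i ≤ b (i + 1) := by
    induction i with
    | zero => simp [hb₀]
    | succ i ih =>
      have hpos : 0 < b (i + 1) := (mul_pos h₁ ih.1).trans_le ih.2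
      refine ⟨hpos, le_of_mul_le_mul_left ?_ ih.1⟩
      calc b i * (b 1 * b (i + 1)) = b 1 * b i * b (i + 1) := by ring
        _ ≤ b (i + 1) * b (i + 1) := by gcongr; exact ih.2
        _ ≤ b i * b (i + 2) := by simpa only [sq] using hlog i
  induction k with
  | zero => simp [hb₀]
  | succ k ih =>
    calc b 1 ^ (k + 1) = b 1 * b 1 ^ k := pow_succ' _ _
      _ ≤ b 1 * b k := by gcongr
      _ ≤ b (k + 1) := (ratio k).2

section Symmetric

variable {𝕜 E : Type*} [RCLike 𝕜] [NormedAddCommGroup E] [InnerProductSpace 𝕜 E]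
  {T : E →ₗ[𝕜] E} {x : E}

lemma norm_apply_pow_le_norm_pow_apply (hT : T.IsSymmetric) (hx : ‖x‖ = 1) (k : ℕ) :
    ‖T x‖ ^ k ≤ ‖(T ^ k) x‖ := by
  have hlog (i : ℕ) : ‖(T ^ (i + 1)) x‖ ^ 2 ≤ ‖(T ^ i) x‖ * ‖(T ^ (i + 2)) x‖ := by
    calc ‖(T ^ (i + 1)) x‖ ^ 2 = ‖inner 𝕜 ((T ^ (i + 1)) x) ((T ^ (i + 1)) x)‖ := by
          rw [inner_self_eq_norm_sq_to_K]; simp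
      _ = ‖inner 𝕜 ((T ^ i) x) ((T ^ (i + 2)) x)‖ := by
          rw [pow_succ' T i, pow_succ' T (i + 1), Module.End.mul_apply, Module.End.mul_apply,
            hT, pow_succ' T i, Module.End.mul_apply]
      _ ≤ ‖(T ^ i) x‖ * ‖(T ^ (i + 2)) x‖ := norm_inner_le_norm _ _
  simpa using pow_le_of_sq_le_mul (b := fun i => ‖(T ^ i) x‖) (fun _ => norm_nonneg _)
    (by simpa using hx) hlog k

lemma norm_inner_apply_self_pow_le (hT : T.IsSymmetric) (hx : ‖x‖ = 1) (k : ℕ) :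
    ‖inner 𝕜 (T x) x‖ ^ k ≤ ‖(T ^ k) x‖ :=
  (pow_le_pow_left₀ (norm_nonneg _) (by simpa [hx] using norm_inner_le_norm (T x) x) k).trans
    (norm_apply_pow_le_norm_pow_apply hT hx k)

end Symmetric

/-! ### Rapidly decreasing sequences -/

/-- A sequence on `ℤ` is rapidly decreasing if it is summable against every power of `1 + |n|`.
The Fourier coefficients of a smooth periodic function have this property. -/
def RapidDecay (u : ℤ → ℂ) : Prop :=
  ∀ N : ℕ, Summable fun n : ℤ => (1 + |(n : ℝ)|) ^ N * ‖u n‖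

/-- The convolution product of two sequences on `ℤ`. -/
def seqConv (u v : ℤ → ℂ) (m : ℤ) : ℂ := ∑' n, u (m - n) * v n

lemma summable_one_add_abs_sq_inv : Summable fun n : ℤ => ((1 + |(n : ℝ)|) ^ 2)⁻¹ := by
  have hnat : Summable fun n : ℕ => ((1 + (n : ℝ)) ^ 2)⁻¹ := by
    simpa [add_comm] using (summable_nat_add_iff 1).2 (Real.summable_nat_pow_inv.2 one_lt_two)
  exact .of_nat_of_neg (by simpa using hnat) (by simpa using hnat)

lemma one_add_abs_add_le (x y : ℝ) : 1 + |x + y| ≤ (1 + |x|) * (1 + |y|) := by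
  nlinarith [abs_add_le x y, abs_nonneg x, abs_nonneg y]

lemma summable_norm_mul_sub {R : Type*} [NormedRing R] {f g : ℤ → R}
    (hf : Summable fun n => ‖f n‖) (hg : Summable fun n => ‖g n‖) :
    Summable fun p : ℤ × ℤ => ‖f (p.1 - p.2) * g p.2‖ :=
  (hf.mul_norm hg).comp_injective (i := fun p : ℤ × ℤ => (p.1 - p.2, p.2)) <| by
    rintro ⟨m, n⟩ ⟨m', n'⟩ h
    grind

namespace RapidDecay

variable {u v : ℤ → ℂ}

lemma of_bounded (h : ∀ N : ℕ, ∃ C, ∀ n : ℤ, |(n : ℝ)| ^ N * ‖u n‖ ≤ C) : RapidDecay u := by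
  intro N
  obtain ⟨C₀, h₀⟩ := h 0
  obtain ⟨C, hC⟩ := h (N + 2)
  have bound (n : ℤ) : (1 + |(n : ℝ)|) ^ (N + 2) * ‖u n‖ ≤ 2 ^ (N + 1) * (C₀ + C) := by
    calc (1 + |(n : ℝ)|) ^ (N + 2) * ‖u n‖
        ≤ 2 ^ (N + 1) * (1 ^ (N + 2) + |(n : ℝ)| ^ (N + 2)) * ‖u n‖ := by
          gcongr
          exact add_pow_le zero_le_one (abs_nonneg _) (N + 2)
      _ = 2 ^ (N + 1) * (|(n : ℝ)| ^ 0 * ‖u n‖ + |(n : ℝ)| ^ (N + 2) * ‖u n‖) := by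
          rw [one_pow, pow_zero]; ring
      _ ≤ 2 ^ (N + 1) * (C₀ + C) := by gcongr <;> simp only [h₀, hC]
  refine (summable_one_add_abs_sq_inv.mul_left (2 ^ (N + 1) * (C₀ + C))).of_nonneg_of_le
    (fun n => by positivity) fun n => ?_
  rw [← div_eq_mul_inv, le_div_iff₀ (by positivity)]
  calc (1 + |(n : ℝ)|) ^ N * ‖u n‖ * (1 + |(n : ℝ)|) ^ 2
      = (1 + |(n : ℝ)|) ^ (N + 2) * ‖u n‖ := by ring
    _ ≤ 2 ^ (N + 1) * (C₀ + C) := bound n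

lemma summable_norm (hu : RapidDecay u) : Summable fun n => ‖u n‖ := by simpa using hu 0

lemma norm_le_tsum (hu : RapidDecay u) (n : ℤ) : ‖u n‖ ≤ ∑' i, ‖u i‖ :=
  hu.summable_norm.le_tsum n fun _ _ => norm_nonneg _

lemma memℓp (hu : RapidDecay u) : Memℓp u 2 :=
  (memℓp_gen (p := 1) (by simpa using hu.summable_norm)).of_exponent_ge (by norm_num)

lemma zero : RapidDecay 0 := fun _ => by simp

lemma add (hu : RapidDecay u) (hv : RapidDecay v) : RapidDecay (u + v) := fun N =>
  ((hu N).add (hv N)).of_nonneg_of_le (fun _ => by positivity) fun n => by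
    rw [← mul_add]
    gcongr
    exact norm_add_le _ _

lemma const_smul (c : ℂ) (hu : RapidDecay u) : RapidDecay (c • u) := fun N => by
  simpa [mul_left_comm] using (hu N).mul_left ‖c‖

lemma intCast_mul {w : ℤ → ℤ} (hw : ∀ n, |w n| ≤ |n|) (hu : RapidDecay u) :
    RapidDecay fun n => w n * u n := fun N =>
  (hu (N + 1)).of_nonneg_of_le (fun _ => by positivity) fun n => by
    have hwn : ‖(w n : ℂ)‖ ≤ 1 + |(n : ℝ)| := by
      rw [Complex.norm_intCast]
      exact_mod_cast (hw n).trans (by simp)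
    rw [norm_mul, pow_succ, mul_assoc]
    gcongr

lemma conv (hu : RapidDecay u) (hv : RapidDecay v) : RapidDecay (seqConv u v) := by
  intro N
  have hsum := summable_norm_mul_sub (hu N).norm (hv N).norm
  refine hsum.prod.of_nonneg_of_le (fun _ => by positivity) fun m => ?_
  have hnorm : Summable fun n => ‖u (m - n) * v n‖ :=
    (summable_norm_mul_sub hu.summable_norm.norm hv.summable_norm.norm).prod_factor m |>.congr
      fun n => by simp
  calc (1 + |(m : ℝ)|) ^ N * ‖seqConv u v m‖
      ≤ (1 + |(m : ℝ)|) ^ N * ∑' n, ‖u (m - n) * v n‖ := by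
        gcongr
        exact norm_tsum_le_tsum_norm hnorm
    _ = ∑' n, (1 + |(m : ℝ)|) ^ N * ‖u (m - n) * v n‖ := tsum_mul_left.symm
    _ ≤ _ := (hnorm.mul_left _).tsum_le_tsum (fun n => ?_) (hsum.prod_factor m)
  have hmn : 1 + |(m : ℝ)| ≤ (1 + |((m - n : ℤ) : ℝ)|) * (1 + |(n : ℝ)|) := by
    simpa using one_add_abs_add_le ((m - n : ℤ) : ℝ) n
  calc (1 + |(m : ℝ)|) ^ N * ‖u (m - n) * v n‖
      ≤ ((1 + |((m - n : ℤ) : ℝ)|) * (1 + |(n : ℝ)|)) ^ N * ‖u (m - n) * v n‖ := by gcongr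
    _ = ‖(1 + |((m - n : ℤ) : ℝ)|) ^ N * ‖u (m - n)‖ * ((1 + |(n : ℝ)|) ^ N * ‖v n‖)‖ := by
        rw [Real.norm_of_nonneg (by positivity), norm_mul, mul_pow]; ring

end RapidDecay

/-- The space `s(ℤ)` of rapidly decreasing sequences, with the inner product of `ℓ²(ℤ)`. -/
def rapidlyDecreasing : Submodule ℂ (lp (fun _ : ℤ => ℂ) 2) where
  carrier := {u | RapidDecay u}
  zero_mem' := RapidDecay.zero
  add_mem' := RapidDecay.add
  smul_mem' c _ := RapidDecay.const_smul c

namespace rapidlyDecreasing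

instance : FunLike rapidlyDecreasing ℤ ℂ where
  coe u := u.1
  coe_injective _ _ h := Subtype.ext (lp.ext h)

lemma ext {u v : rapidlyDecreasing} (h : ∀ n, u n = v n) : u = v :=
  DFunLike.ext _ _ h

/-- A rapidly decreasing sequence as an element of `rapidlyDecreasing`. -/
def mk (u : ℤ → ℂ) (hu : RapidDecay u) : rapidlyDecreasing := ⟨⟨u, hu.memℓp⟩, hu⟩

lemma hasSum_inner (u v : rapidlyDecreasing) : HasSum (fun n => v n * conj (u n)) ⟪u, v⟫_ℂ :=
  lp.hasSum_inner u.1 v.1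

lemma inner_eq_tsum (u v : rapidlyDecreasing) : ⟪u, v⟫_ℂ = ∑' n, v n * conj (u n) :=
  (hasSum_inner u v).tsum_eq.symm

/-- The diagonal operator `u ↦ (w n * u n)ₙ` for an integer weight `w` of at most linear size. -/
def weightOp (w : ℤ → ℤ) (hw : ∀ n, |w n| ≤ |n|) : rapidlyDecreasing →ₗ[ℂ] rapidlyDecreasing where
  toFun u := mk (fun n => w n * u n) (u.2.intCast_mul hw)
  map_add' _ _ := ext fun _ => mul_add _ _ _
  map_smul' _ _ := ext fun _ => mul_left_comm _ _ _

@[simp] lemma weightOp_apply (w : ℤ → ℤ) (hw : ∀ n, |w n| ≤ |n|) (u : rapidlyDecreasing) (n : ℤ) :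
    weightOp w hw u n = w n * u n := rfl

/-- The Fourier side of the operator `D = -i d/dθ`. -/
def freqOp : rapidlyDecreasing →ₗ[ℂ] rapidlyDecreasing := weightOp id fun _ => le_rfl

/-- The Fourier side of the operator `|D|`. -/
def absFreqOp : rapidlyDecreasing →ₗ[ℂ] rapidlyDecreasing := weightOp abs fun n => (abs_abs n).le

lemma isSymmetric_weightOp (w : ℤ → ℤ) (hw : ∀ n, |w n| ≤ |n|) :
    (weightOp w hw).IsSymmetric := fun u v => by
  simp only [inner_eq_tsum, weightOp_apply, map_mul, map_intCast, mul_left_comm, mul_assoc]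

lemma inner_weightOp_self (w : ℤ → ℤ) (hw : ∀ n, |w n| ≤ |n|) (u : rapidlyDecreasing) :
    HasSum (fun n => w n * ‖u n‖ ^ 2) (⟪weightOp w hw u, u⟫_ℂ).re := by
  convert Complex.hasSum_re (hasSum_inner (weightOp w hw u) u) using 2 with n
  rw [weightOp_apply, map_mul, map_intCast, mul_left_comm, Complex.mul_conj,
    Complex.normSq_eq_norm_sq]
  norm_cast

lemma summable_norm_conv (f u : rapidlyDecreasing) :
    Summable fun p : ℤ × ℤ => ‖f (p.1 - p.2) * u p.2‖ :=
  summable_norm_mul_sub f.2.summable_norm u.2.summable_norm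

lemma hasSum_conv (f u : rapidlyDecreasing) (m : ℤ) :
    HasSum (fun n => f (m - n) * u n) (seqConv f u m) :=
  ((summable_norm_conv f u).of_norm.prod_factor m).hasSum

/-- Convolution with `f`, the Fourier side of multiplication by a smooth function. -/
def convOp (f : rapidlyDecreasing) : rapidlyDecreasing →ₗ[ℂ] rapidlyDecreasing where
  toFun u := mk (seqConv f u) (f.2.conv u.2)
  map_add' u v := ext fun m =>
    (((hasSum_conv f u m).add (hasSum_conv f v m)).congr_fun fun _ => mul_add _ _ _).tsum_eq
  map_smul' c u := ext fun m =>
    (((hasSum_conv f u m).const_smul c).congr_fun fun _ => mul_left_comm _ _ _).tsum_eq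

@[simp] lemma convOp_apply (f u : rapidlyDecreasing) (m : ℤ) : convOp f u m = seqConv f u m := rfl

lemma isSymmetric_convOp {f : rapidlyDecreasing} (hf : ∀ n, f (-n) = conj (f n)) :
    (convOp f).IsSymmetric := by
  intro u v
  have hsum : Summable (Function.uncurry fun m n => v m * (conj (f (m - n)) * conj (u n))) := by
    have hle (p : ℤ × ℤ) : ‖v p.1 * (conj (f (p.1 - p.2)) * conj (u p.2))‖
        ≤ (∑' i, ‖v i‖) * ‖f (p.1 - p.2) * u p.2‖ := by
      rw [norm_mul, norm_mul, RCLike.norm_conj, RCLike.norm_conj, ← norm_mul]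
      gcongr
      exact v.2.norm_le_tsum p.1
    exact .of_norm_bounded ((summable_norm_conv f u).mul_left _) hle
  calc ⟪convOp f u, v⟫_ℂ = ∑' m, ∑' n, v m * (conj (f (m - n)) * conj (u n)) := by
        simp only [inner_eq_tsum, convOp_apply, seqConv, Complex.conj_tsum, map_mul, tsum_mul_left]
    _ = ∑' n, ∑' m, v m * (conj (f (m - n)) * conj (u n)) := hsum.tsum_comm.symm
    _ = ⟪u, convOp f v⟫_ℂ := by
        simp only [inner_eq_tsum, convOp_apply, seqConv, ← tsum_mul_right, ← hf, neg_sub]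
        exact tsum_congr fun n => tsum_congr fun m => by ring

lemma convOp_convOp (f g : rapidlyDecreasing) : convOp (convOp f g) = convOp f * convOp g := by
  refine LinearMap.ext fun u => ext fun m => ?_
  have hsum : Summable (Function.uncurry fun k n => f (m - k) * (g (k - n) * u n)) := by
    have hle (p : ℤ × ℤ) : ‖f (m - p.1) * (g (p.1 - p.2) * u p.2)‖
        ≤ (∑' i, ‖f i‖) * ‖g (p.1 - p.2) * u p.2‖ := by
      rw [norm_mul]
      gcongr
      exact f.2.norm_le_tsum (m - p.1)
    exact .of_norm_bounded ((summable_norm_conv g u).mul_left _) hle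
  calc seqConv (seqConv f g) u m = ∑' n, ∑' k, f (m - k) * (g (k - n) * u n) := by
        refine tsum_congr fun n => ?_
        rw [seqConv, ← tsum_mul_right, ← (Equiv.subRight n).tsum_eq]
        refine tsum_congr fun k => ?_
        rw [Equiv.subRight_apply, sub_sub_sub_cancel_right, mul_assoc]
    _ = ∑' k, ∑' n, f (m - k) * (g (k - n) * u n) := hsum.tsum_comm
    _ = seqConv f (seqConv g u) m := by simp only [seqConv, tsum_mul_left]

lemma abs_inner_freqOp_le (u : rapidlyDecreasing) :
    |(⟪freqOp u, u⟫_ℂ).re| ≤ (⟪absFreqOp u, u⟫_ℂ).re := by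
  refine (inner_weightOp_self _ _ u).norm_le_of_bounded (inner_weightOp_self _ _ u) fun n => ?_
  simp

lemma inner_freqOp_lt {u : rapidlyDecreasing} {m : ℤ} (hm : m < 0) (hu : u m ≠ 0) :
    (⟪freqOp u, u⟫_ℂ).re < (⟪absFreqOp u, u⟫_ℂ).re := by
  refine hasSum_lt (i := m) (fun n => ?_) ?_ (inner_weightOp_self _ _ u)
    (inner_weightOp_self _ _ u)
  · gcongr
    exact le_abs_self n
  · have : 0 < ‖u m‖ := norm_pos_iff.2 hu
    gcongr
    exact hm.trans_le (abs_nonneg m)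

end rapidlyDecreasing

/-! ### Path expansions -/

/-- The product of the weights `w` along the positions `n, n + j₁, n + j₁ + j₂, …` visited by the
path with starting point `n` and steps `j₁, …, j_m` (the end point does not contribute). -/
def pathWeight (w : ℤ → ℤ) {m : ℕ} (j : Fin m → ℤ) (n : ℤ) : ℤ :=
  ∏ i, w (n + ∑ l ∈ Finset.Iio i, j l)

lemma pathWeight_cons (w : ℤ → ℤ) {m : ℕ} (j₀ : ℤ) (j : Fin m → ℤ) (n : ℤ) :
    pathWeight w (Fin.cons j₀ j : Fin (m + 1) → ℤ) n = w n * pathWeight w j (n + j₀) := by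
  simp only [pathWeight, ← Finset.filter_gt_eq_Iio, Finset.sum_filter, Fin.prod_univ_succ,
    Fin.sum_univ_succ, Fin.cons_zero, Fin.cons_succ]
  simp [add_assoc]

lemma pathWeight_abs {m : ℕ} (j : Fin m → ℤ) (n : ℤ) :
    pathWeight abs j n = |pathWeight id j n| :=
  (Finset.abs_prod _ _).symm

lemma one_add_sum_le_prod_one_add {ι : Type*} (s : Finset ι) {f : ι → ℝ} (hf : ∀ i, 0 ≤ f i) :
    1 + ∑ i ∈ s, f i ≤ ∏ i ∈ s, (1 + f i) := by
  induction s using Finset.cons_induction with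
  | empty => simp
  | cons i s hi ih =>
    rw [Finset.sum_cons, Finset.prod_cons]
    nlinarith [mul_nonneg (hf i) (Finset.sum_nonneg fun i _ => hf i : 0 ≤ ∑ i ∈ s, f i), hf i]

lemma summable_prod_pi {α : Type*} {f : α → ℝ} (hf : Summable f) (hf₀ : 0 ≤ f) (m : ℕ) :
    Summable fun j : Fin m → α => ∏ i, f (j i) := by
  induction m with
  | zero => exact (hasSum_fintype _).summable
  | succ m ih =>
    rw [← (Fin.consEquiv fun _ : Fin (m + 1) => α).summable_iff]
    refine (hf.mul_of_nonneg ih hf₀ fun j => Finset.prod_nonneg fun i _ => hf₀ _).congr fun p => ?_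
    simp [Fin.consEquiv, Fin.prod_univ_succ]

lemma abs_sum_Iio_le {m : ℕ} (j : Fin m → ℤ) (i : Fin m) :
    |∑ l ∈ Finset.Iio i, j l| ≤ ∑ l, |j l| :=
  (Finset.abs_sum_le_sum_abs _ _).trans <|
    Finset.sum_le_sum_of_subset_of_nonneg (Finset.subset_univ _) fun _ _ _ => abs_nonneg _

lemma abs_pathWeight_le {w : ℤ → ℤ} (hw : ∀ n, |w n| ≤ |n|) {m : ℕ} (j : Fin m → ℤ) (n : ℤ) :
    |(pathWeight w j n : ℝ)| ≤ ((1 + |(n : ℝ)|) * ∏ i, (1 + |(j i : ℝ)|)) ^ m := by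
  have factor (i : Fin m) : |(w (n + ∑ l ∈ Finset.Iio i, j l) : ℝ)|
      ≤ (1 + |(n : ℝ)|) * ∏ i, (1 + |(j i : ℝ)|) := by
    calc |(w (n + ∑ l ∈ Finset.Iio i, j l) : ℝ)|
        ≤ 1 + |(n : ℝ) + (∑ l ∈ Finset.Iio i, j l : ℤ)| := by
          exact_mod_cast (hw _).trans (Int.le_add_of_nonneg_left zero_le_one)
      _ ≤ (1 + |(n : ℝ)|) * (1 + |((∑ l ∈ Finset.Iio i, j l : ℤ) : ℝ)|) := one_add_abs_add_le _ _
      _ ≤ (1 + |(n : ℝ)|) * (1 + ∑ l, |(j l : ℝ)|) := by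
          gcongr
          exact_mod_cast abs_sum_Iio_le j i
      _ ≤ (1 + |(n : ℝ)|) * ∏ i, (1 + |(j i : ℝ)|) := by
          gcongr
          exact one_add_sum_le_prod_one_add _ fun _ => abs_nonneg _
  rw [pathWeight, Int.cast_prod, Finset.abs_prod]
  exact (Finset.prod_le_prod (fun _ _ => abs_nonneg _) fun i _ => factor i).trans_eq (by simp)

section PathTerm

open rapidlyDecreasing

variable {w : ℤ → ℤ} (f u v : rapidlyDecreasing)

/-- The contribution of the path `p = (n, (j₁, …, j_m))` to the matrix coefficient
`⟪v, (convOp f * weightOp w) ^ m u⟫`. -/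
def pathTerm (w : ℤ → ℤ) (f u v : rapidlyDecreasing) (m : ℕ) (p : ℤ × (Fin m → ℤ)) : ℂ :=
  (pathWeight w p.2 p.1 * ∏ i, f (p.2 i)) * (u p.1 * conj (v (p.1 + ∑ i, p.2 i)))

lemma summable_pathTerm (hw : ∀ n, |w n| ≤ |n|) (m : ℕ) : Summable (pathTerm w f u v m) := by
  have hmaj := ((u.2 m).mul_of_nonneg (summable_prod_pi (f.2 m) (fun _ => by positivity) m)
    (fun _ => by positivity) (fun _ => by positivity)).mul_right (∑' i, ‖v i‖)
  have hle (p : ℤ × (Fin m → ℤ)) : ‖pathTerm w f u v m p‖ ≤ (1 + |(p.1 : ℝ)|) ^ m * ‖u p.1‖ *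
      (∏ i, (1 + |(p.2 i : ℝ)|) ^ m * ‖f (p.2 i)‖) * ∑' i, ‖v i‖ := by
    calc ‖pathTerm w f u v m p‖
        = |(pathWeight w p.2 p.1 : ℝ)| * (∏ i, ‖f (p.2 i)‖) *
            (‖u p.1‖ * ‖v (p.1 + ∑ i, p.2 i)‖) := by
          simp only [pathTerm, norm_mul, norm_prod, Complex.norm_intCast, RCLike.norm_conj]
      _ ≤ ((1 + |(p.1 : ℝ)|) * ∏ i, (1 + |(p.2 i : ℝ)|)) ^ m * (∏ i, ‖f (p.2 i)‖) *
            (‖u p.1‖ * ∑' i, ‖v i‖) := by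
          gcongr
          · exact abs_pathWeight_le hw _ _
          · exact v.2.norm_le_tsum _
      _ = _ := by
          rw [mul_pow, Finset.prod_mul_distrib, Finset.prod_pow]; ring
  exact .of_norm_bounded hmaj hle

/-- The bijection `((n + j₀, j), n) ↦ (n, j₀ :: j)` that splits the first step off a path. -/
def pathEquiv (m : ℕ) : (ℤ × (Fin m → ℤ)) × ℤ ≃ ℤ × (Fin (m + 1) → ℤ) where
  toFun p := (p.2, Fin.cons (p.1.1 - p.2) p.1.2)
  invFun q := ((q.1 + q.2 0, Fin.tail q.2), q.1)
  left_inv p := by simp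
  right_inv q := by simp

lemma pathTerm_pathEquiv (w : ℤ → ℤ) (m : ℕ) (p : ℤ × (Fin m → ℤ)) (n : ℤ) :
    pathTerm w f u v (m + 1) (pathEquiv m (p, n)) =
      (pathWeight w p.2 p.1 * ∏ i, f (p.2 i)) *
        (f (p.1 - n) * (w n * u n) * conj (v (p.1 + ∑ i, p.2 i))) := by
  simp only [pathTerm, pathEquiv, Equiv.coe_fn_mk, pathWeight_cons, Fin.prod_univ_succ,
    Fin.sum_univ_succ, Fin.cons_zero, Fin.cons_succ, Int.cast_mul, ← add_assoc,
    add_sub_cancel]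
  ring

lemma hasSum_pathTerm (hw : ∀ n, |w n| ≤ |n|) (m : ℕ) :
    HasSum (pathTerm w f u v m) ⟪v, ((convOp f * weightOp w hw) ^ m) u⟫_ℂ := by
  induction m generalizing u with
  | zero =>
    rw [← (Equiv.prodUnique ℤ (Fin 0 → ℤ)).symm.hasSum_iff]
    rw [pow_zero, Module.End.one_apply]
    convert hasSum_inner v u using 2 with n
    simp [pathTerm, pathWeight]
  | succ m ih =>
    have hsum := (pathEquiv m).summable_iff.2 (summable_pathTerm f u v hw (m + 1))
    have hfiber (p : ℤ × (Fin m → ℤ)) :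
        HasSum (fun n => pathTerm w f u v (m + 1) (pathEquiv m (p, n)))
          (pathTerm w f (convOp f (weightOp w hw u)) v m p) := by
      simp only [pathTerm_pathEquiv]
      exact ((hasSum_conv f (weightOp w hw u) p.1).mul_right _).mul_left _
    rw [pow_succ, Module.End.mul_apply, Module.End.mul_apply, ← (pathEquiv m).hasSum_iff,
      ← (hsum.hasSum.prod_fiberwise hfiber).unique (ih _)]
    exact hsum.hasSum

end PathTerm

lemma prodPoly_nonneg {m : ℕ} (hm : Even m) {j : Fin m → ℤ} {n : ℤ} (hj : ∑ i, |j i| < |n|) :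
    0 ≤ prodPoly m j n := by
  have small (i : Fin m) : |∑ l ∈ Finset.Iio i, j l| < |n| := (abs_sum_Iio_le j i).trans_lt hj
  rcases le_total 0 n with hn | hn
  · refine Finset.prod_nonneg fun i _ => ?_
    have := abs_lt.1 (abs_of_nonneg hn ▸ small i)
    linarith
  · have hneg : prodPoly m j n = ∏ i, -(n + ∑ l ∈ Finset.Iio i, j l) := by
      rw [Finset.prod_neg]
      simp [prodPoly, hm.neg_one_pow]
    rw [hneg]
    refine Finset.prod_nonneg fun i _ => ?_
    have := abs_lt.1 (abs_of_nonpos hn ▸ small i)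
    linarith

/-- The summand `(|n(n+j₁)⋯| - n(n+j₁)⋯) f(j₁)⋯f(j_m)` of the zeta-invariant, for a path
`p = (n, (j₁, …, j_m))` that need not be closed. -/
def zetaWeight (f : ℤ → ℂ) (m : ℕ) (p : ℤ × (Fin m → ℤ)) : ℂ :=
  ((|prodPoly m p.2 p.1| - prodPoly m p.2 p.1 : ℤ) : ℂ) * ∏ i, f (p.2 i)

lemma norm_zetaWeight_le (f : ℤ → ℂ) {m : ℕ} (hm : Even m) (n : ℤ) (j : Fin m → ℤ) :
    ‖zetaWeight f m (n, j)‖ ≤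
      2 * (((1 + |(n : ℝ)|) ^ 2)⁻¹ * ∏ i, (1 + |(j i : ℝ)|) ^ (m + m + 2) * ‖f (j i)‖) := by
  rw [Finset.prod_mul_distrib, Finset.prod_pow]
  set P := ∏ i, (1 + |(j i : ℝ)|)
  have : 0 ≤ P := Finset.prod_nonneg fun _ _ => by positivity
  rcases lt_or_ge (∑ i, |j i|) |n| with hn | hn
  · rw [zetaWeight, abs_of_nonneg (prodPoly_nonneg hm hn), sub_self, Int.cast_zero, zero_mul,
      norm_zero]
    positivity
  have hnP : 1 + |(n : ℝ)| ≤ P := by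
    refine le_trans ?_ (one_add_sum_le_prod_one_add _ fun _ => abs_nonneg _)
    gcongr
    exact_mod_cast hn
  have hpoly : |(prodPoly m j n : ℝ)| ≤ ((1 + |(n : ℝ)|) * P) ^ m :=
    abs_pathWeight_le (w := id) (fun _ => le_rfl) j n
  calc ‖zetaWeight f m (n, j)‖
      = ‖(|(prodPoly m j n : ℝ)| - prodPoly m j n : ℝ)‖ * ∏ i, ‖f (j i)‖ := by
        rw [zetaWeight, norm_mul, norm_prod, Complex.norm_intCast, Real.norm_eq_abs]
        norm_cast
    _ ≤ 2 * ((1 + |(n : ℝ)|) * P) ^ m * ∏ i, ‖f (j i)‖ := by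
        gcongr
        refine (norm_sub_le _ _).trans ?_
        rw [norm_abs_eq_norm, Real.norm_eq_abs]
        linarith
    _ ≤ 2 * (P * P) ^ m * (((1 + |(n : ℝ)|) ^ 2)⁻¹ * P ^ 2) * ∏ i, ‖f (j i)‖ := by
        have one_le : 1 ≤ ((1 + |(n : ℝ)|) ^ 2)⁻¹ * P ^ 2 := by
          rw [inv_mul_eq_div, one_le_div (by positivity)]
          gcongr
        refine mul_le_mul_of_nonneg_right ?_ (by positivity)
        calc 2 * ((1 + |(n : ℝ)|) * P) ^ m ≤ 2 * (P * P) ^ m := by gcongr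
          _ ≤ _ := le_mul_of_one_le_right (by positivity) one_le
    _ = _ := by ring

lemma summable_zetaWeight {f : ℤ → ℂ} (hf : RapidDecay f) {m : ℕ} (hm : Even m) :
    Summable (zetaWeight f m) :=
  .of_norm_bounded ((summable_one_add_abs_sq_inv.mul_of_nonneg
    (summable_prod_pi (hf (m + m + 2)) (fun _ => by positivity) m)
    (fun _ => by positivity) (fun _ => by positivity)).mul_left 2)
    fun p => norm_zetaWeight_le f hm p.1 p.2

lemma hasSum_zetaWeight_mul (f u v : rapidlyDecreasing) (m : ℕ) :
    HasSum (fun p => zetaWeight f m p * (u p.1 * conj (v (p.1 + ∑ i, p.2 i))))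
      (⟪v, ((rapidlyDecreasing.convOp f * rapidlyDecreasing.absFreqOp) ^ m) u⟫_ℂ -
        ⟪v, ((rapidlyDecreasing.convOp f * rapidlyDecreasing.freqOp) ^ m) u⟫_ℂ) := by
  refine ((hasSum_pathTerm (w := abs) f u v (fun n => (abs_abs n).le) m).sub
    (hasSum_pathTerm (w := id) f u v (fun _ => le_rfl) m)).congr_fun fun p => ?_
  have hid : pathWeight id p.2 p.1 = prodPoly m p.2 p.1 := rfl
  rw [zetaWeight, pathTerm, pathTerm, pathWeight_abs, hid, Int.cast_sub]
  ring

lemma tsum_subtype_tsum {ι J : Type*} (s : Set J) [DecidablePred (· ∈ s)] {F : ι × J → ℂ}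
    (hF : Summable F) :
    ∑' j : s, ∑' i, F (i, j) = ∑' p : ι × J, F p * (if p.2 ∈ s then 1 else 0) := by
  have hsum : Summable fun p : ι × J => F p * (if p.2 ∈ s then 1 else 0) := by
    refine hF.norm.of_norm_bounded fun p => ?_
    rw [norm_mul]
    split_ifs <;> simp
  rw [tsum_subtype s fun j => ∑' i, F (i, j), hsum.tsum_prod,
    ← Summable.tsum_comm (f := fun i j => F (i, j) * (if j ∈ s then 1 else 0)) hsum]
  refine tsum_congr fun j => ?_
  by_cases hj : j ∈ s <;> simp [hj]

lemma zetaInv_eq_tsum_zetaWeight {a : ℝ → ℝ} (ha : RapidDecay (fCoef fun θ => (a θ : ℂ))) (k : ℕ) :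
    ZetaInv k a = ∑' p : ℤ × (Fin (2 * k) → ℤ),
      zetaWeight (fCoef fun θ => (a θ : ℂ)) (2 * k) p * (if ∑ i, p.2 i = 0 then 1 else 0) := by
  refine (tsum_congr fun j => ?_).trans
    (tsum_subtype_tsum {j : Fin (2 * k) → ℤ | ∑ i, j i = 0}
      (summable_zetaWeight ha (even_two_mul k)))
  simp only [zetaTerm, zetaWeight, Ncoef]
  rw [tsum_mul_right, Complex.ofReal_tsum]
  congr 1

/-! ### Fourier coefficients of periodic functions -/

instance instFactTwoPiPos : Fact (0 < 2 * π) := ⟨two_pi_pos⟩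

/-- Continuous `2π`-periodic functions. -/
structure ContinuousPeriodic (u : ℝ → ℂ) : Prop where
  continuous : Continuous u
  periodic : Function.Periodic u (2 * π)

/-- Smooth `2π`-periodic functions. -/
structure SmoothPeriodic (u : ℝ → ℂ) : Prop where
  contDiff : ContDiff ℝ (⊤ : ℕ∞) u
  periodic : Function.Periodic u (2 * π)

/-- The exponential `θ ↦ e^{inθ}`. -/
def mode (n : ℤ) (θ : ℝ) : ℂ := Complex.exp (Complex.I * n * θ)

lemma mode_zero (θ : ℝ) : mode 0 θ = 1 := by simp [mode]

lemma mode_add (m n : ℤ) (θ : ℝ) : mode (m + n) θ = mode m θ * mode n θ := by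
  rw [mode, mode, mode, ← Complex.exp_add, Int.cast_add]
  ring_nf

lemma conj_mode (n : ℤ) (θ : ℝ) : conj (mode n θ) = mode (-n) θ := by
  simp [mode, ← Complex.exp_conj]

lemma mode_mul_conj_mode (m n : ℤ) (θ : ℝ) : mode m θ * conj (mode n θ) = mode (m - n) θ := by
  rw [conj_mode, ← mode_add, sub_eq_add_neg]

lemma hasDerivAt_mode (n : ℤ) (θ : ℝ) : HasDerivAt (mode n) (mode n θ * (Complex.I * n)) θ := by
  have h : HasDerivAt (fun θ : ℝ => Complex.I * n * θ) (Complex.I * n) θ := by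
    simpa using (Complex.ofRealCLM.hasDerivAt (x := θ)).const_mul (Complex.I * n)
  exact h.cexp

lemma smoothPeriodic_mode (n : ℤ) : SmoothPeriodic (mode n) where
  contDiff := (contDiff_const.mul Complex.ofRealCLM.contDiff).cexp
  periodic θ := by
    rw [mode, mode, ← Complex.exp_periodic.int_mul n (Complex.I * n * θ)]
    push_cast
    ring_nf

lemma fCoef_eq_integral_mode (u : ℝ → ℂ) (n : ℤ) :
    fCoef u n = (2 * π)⁻¹ * ∫ θ in (0 : ℝ)..2 * π, u θ * mode (-n) θ := by
  simp [fCoef, mode]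

lemma fCoef_mul_mode (u : ℝ → ℂ) (m n : ℤ) :
    fCoef (fun θ => u θ * mode m θ) n = fCoef u (n - m) := by
  simp only [fCoef_eq_integral_mode, mul_assoc, ← mode_add, neg_sub, ← sub_eq_add_neg]

lemma conj_fCoef (u : ℝ → ℂ) (n : ℤ) : conj (fCoef u n) = fCoef (fun θ => conj (u θ)) (-n) := by
  rw [fCoef_eq_integral_mode, fCoef_eq_integral_mode, map_mul,
    ← intervalIntegral.intervalIntegral_conj, Complex.conj_ofReal]
  simp only [map_mul, conj_mode]

lemma fCoef_const_mul (c : ℂ) (u : ℝ → ℂ) (n : ℤ) : fCoef (fun θ => c * u θ) n = c * fCoef u n := by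
  simp only [fCoef, mul_assoc c, intervalIntegral.integral_const_mul, mul_left_comm _ c]

lemma fCoef_one_zero : fCoef (fun _ => 1) 0 = 1 := by
  rw [fCoef_eq_integral_mode]
  simp only [neg_zero, mode_zero, mul_one, intervalIntegral.integral_const, sub_zero]
  rw [Complex.real_smul, mul_one, ← Complex.ofReal_mul, inv_mul_cancel₀ two_pi_pos.ne',
    Complex.ofReal_one]

namespace ContinuousPeriodic

variable {u v : ℝ → ℂ}

lemma mul (hu : ContinuousPeriodic u) (hv : ContinuousPeriodic v) :
    ContinuousPeriodic fun θ => u θ * v θ :=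
  ⟨hu.continuous.mul hv.continuous, hu.periodic.mul hv.periodic⟩

lemma star (hu : ContinuousPeriodic u) : ContinuousPeriodic fun θ => conj (u θ) :=
  ⟨hu.continuous.star, hu.periodic.comp _⟩

/-- The function on the circle induced by a periodic function. -/
def toCircle (hu : ContinuousPeriodic u) : C(AddCircle (2 * π), ℂ) where
  toFun := hu.periodic.lift
  continuous_toFun := continuous_coinduced_dom.2 hu.continuous

lemma fourierCoeff_toCircle (hu : ContinuousPeriodic u) (n : ℤ) :
    fourierCoeff hu.toCircle n = fCoef u n := by
  rw [fourierCoeff_eq_intervalIntegral _ n 0, zero_add, fCoef_eq_integral_mode, ← Complex.coe_smul,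
    smul_eq_mul]
  congr 1
  · simp
  · refine intervalIntegral.integral_congr fun θ _ => ?_
    have hpi : (π : ℂ) ≠ 0 := Complex.ofReal_ne_zero.2 pi_ne_zero
    simp only [fourier_coe_apply, smul_eq_mul, mode, mul_comm (u θ)]
    congr 2
    push_cast
    field_simp

lemma hasSum_fCoef_mul_conj (hu : ContinuousPeriodic u) (hv : ContinuousPeriodic v) :
    HasSum (fun l => fCoef u l * conj (fCoef v l)) (fCoef (fun θ => u θ * conj (v θ)) 0) := by
  have parseval := (fourierBasis (T := 2 * π)).hasSum_inner_mul_inner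
    (ContinuousMap.toLp (E := ℂ) 2 AddCircle.haarAddCircle ℂ hv.toCircle)
    (ContinuousMap.toLp (E := ℂ) 2 AddCircle.haarAddCircle ℂ hu.toCircle)
  rw [ContinuousMap.inner_toLp] at parseval
  convert! parseval using 1
  · ext l
    rw [← inner_conj_symm, ← HilbertBasis.repr_apply_apply, ← HilbertBasis.repr_apply_apply,
      fourierBasis_repr, fourierBasis_repr, fourierCoeff_toLp, fourierCoeff_toLp,
      fourierCoeff_toCircle, fourierCoeff_toCircle, mul_comm]
  · rw [← (hu.mul hv.star).fourierCoeff_toCircle, fourierCoeff]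
    refine integral_congr_ae (.of_forall fun x => ?_)
    induction x using QuotientAddGroup.induction_on
    simp [toCircle]

lemma hasSum_norm_fCoef_sq (hu : ContinuousPeriodic u) :
    HasSum (fun l => ‖fCoef u l‖ ^ 2) (fCoef (fun θ => u θ * conj (u θ)) 0).re := by
  simpa only [Complex.mul_conj', ← Complex.ofReal_pow, Complex.ofReal_re] using
    Complex.hasSum_re (hu.hasSum_fCoef_mul_conj hu)

lemma hasSum_fCoef_mul (hu : ContinuousPeriodic u) (hv : ContinuousPeriodic v) (m : ℤ) :
    HasSum (fun n => fCoef u (m - n) * fCoef v n) (fCoef (fun θ => u θ * v θ) m) := by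
  have hmode : ContinuousPeriodic (mode m) :=
    ⟨(smoothPeriodic_mode m).contDiff.continuous, (smoothPeriodic_mode m).periodic⟩
  have h := hv.hasSum_fCoef_mul_conj (hu.star.mul hmode)
  have coef (n : ℤ) :
      conj (fCoef (fun θ => conj (u θ) * mode m θ) n) = fCoef u (m - n) := by
    rw [fCoef_mul_mode, conj_fCoef]
    simp
  have total : fCoef (fun θ => v θ * conj (conj (u θ) * mode m θ)) 0 =
      fCoef (fun θ => u θ * v θ) m := by
    calc fCoef (fun θ => v θ * conj (conj (u θ) * mode m θ)) 0
        = fCoef (fun θ => u θ * v θ * mode (-m) θ) 0 := by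
          simp only [map_mul, Complex.conj_conj, conj_mode, mul_left_comm, mul_assoc]
      _ = fCoef (fun θ => u θ * v θ) m := by rw [fCoef_mul_mode, zero_sub, neg_neg]
  simpa only [coef, total, mul_comm (fCoef v _)] using h

lemma exists_norm_fCoef_le (hu : ContinuousPeriodic u) : ∃ C, ∀ n, ‖fCoef u n‖ ≤ C :=
  ⟨√(fCoef (fun θ => u θ * conj (u θ)) 0).re, fun n => Real.le_sqrt_of_sq_le
    (le_hasSum hu.hasSum_norm_fCoef_sq n fun _ _ => by positivity)⟩

end ContinuousPeriodic

namespace SmoothPeriodic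

variable {u v w : ℝ → ℂ}

lemma continuousPeriodic (hu : SmoothPeriodic u) : ContinuousPeriodic u :=
  ⟨hu.contDiff.continuous, hu.periodic⟩

lemma mul (hu : SmoothPeriodic u) (hv : SmoothPeriodic v) : SmoothPeriodic fun θ => u θ * v θ :=
  ⟨hu.contDiff.mul hv.contDiff, hu.periodic.mul hv.periodic⟩

lemma deriv (hu : SmoothPeriodic u) : SmoothPeriodic (deriv u) where
  contDiff := (contDiff_infty_iff_deriv.1 hu.contDiff).2
  periodic θ := by rw [← deriv_comp_add_const, hu.periodic.funext]

lemma fCoef_deriv (hu : SmoothPeriodic u) (n : ℤ) :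
    fCoef (_root_.deriv u) n = Complex.I * n * fCoef u n := by
  have hm := smoothPeriodic_mode (-n)
  have parts := intervalIntegral.integral_mul_deriv_eq_deriv_mul (a := 0) (b := 2 * π)
    (fun θ _ => (hu.contDiff.differentiable (by simp) θ).hasDerivAt)
    (fun θ _ => hasDerivAt_mode (-n) θ) (hu.deriv.contDiff.continuous.intervalIntegrable _ _)
    ((hm.contDiff.continuous.mul continuous_const).intervalIntegrable _ _)
  have boundary : u (2 * π) * mode (-n) (2 * π) = u 0 * mode (-n) 0 := by
    rw [hu.periodic.eq, hm.periodic.eq]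
  rw [boundary, sub_self, zero_sub] at parts
  rw [fCoef_eq_integral_mode, fCoef_eq_integral_mode, ← neg_eq_iff_eq_neg.2 parts]
  simp only [← mul_assoc, intervalIntegral.integral_mul_const]
  push_cast
  ring

lemma exists_abs_pow_mul_norm_fCoef_le (hu : SmoothPeriodic u) (N : ℕ) :
    ∃ C, ∀ n : ℤ, |(n : ℝ)| ^ N * ‖fCoef u n‖ ≤ C := by
  induction N generalizing u with
  | zero => simpa using hu.continuousPeriodic.exists_norm_fCoef_le
  | succ N ih =>
    obtain ⟨C, hC⟩ := ih hu.deriv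
    refine ⟨C, fun n => ?_⟩
    simpa [hu.fCoef_deriv, pow_succ, mul_assoc] using hC n

lemma rapidDecay_fCoef (hu : SmoothPeriodic u) : RapidDecay (fCoef u) :=
  .of_bounded hu.exists_abs_pow_mul_norm_fCoef_le

/-- The sequence of Fourier coefficients of a smooth periodic function, as a vector. -/
def coeffs (hu : SmoothPeriodic u) : rapidlyDecreasing :=
  rapidlyDecreasing.mk (fCoef u) hu.rapidDecay_fCoef

lemma convOp_coeffs (hu : SmoothPeriodic u) (hv : SmoothPeriodic v) (hw : SmoothPeriodic w)
    (h : ∀ θ, u θ * v θ = w θ) : rapidlyDecreasing.convOp hu.coeffs hv.coeffs = hw.coeffs := by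
  obtain rfl : (fun θ => u θ * v θ) = w := funext h
  exact rapidlyDecreasing.ext fun m =>
    (hu.continuousPeriodic.hasSum_fCoef_mul hv.continuousPeriodic m).tsum_eq

lemma inner_coeffs (hu : SmoothPeriodic u) (hv : SmoothPeriodic v) :
    ⟪hu.coeffs, hv.coeffs⟫_ℂ = fCoef (fun θ => v θ * conj (u θ)) 0 :=
  (rapidlyDecreasing.hasSum_inner _ _).unique
    (hv.continuousPeriodic.hasSum_fCoef_mul_conj hu.continuousPeriodic)

end SmoothPeriodic

lemma fCoef_one (n : ℤ) : fCoef (fun _ => 1) n = if n = 0 then 1 else 0 := by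
  split_ifs with hn
  · rw [hn, fCoef_one_zero]
  · have h := SmoothPeriodic.fCoef_deriv (u := fun _ => 1) ⟨contDiff_const, fun _ => rfl⟩ n
    have hzero : fCoef (deriv fun _ => 1) n = 0 := by simp [fCoef]
    rw [hzero, eq_comm] at h
    simpa only [mul_eq_zero, Complex.I_ne_zero, Int.cast_eq_zero, hn, false_or] using h

/-! ### Lowest frequencies -/

section LowestFrequency

variable {u v : ℤ → ℂ} {b c : ℤ}

lemma seqConv_eq_zero_of_lt (hu : ∀ n < b, u n = 0) (hv : ∀ n < c, v n = 0) {m : ℤ}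
    (hm : m < b + c) : seqConv u v m = 0 := by
  refine (tsum_congr fun n => ?_).trans tsum_zero
  rcases lt_or_ge n c with hn | hn
  · rw [hv n hn, mul_zero]
  · rw [hu _ (by lia), zero_mul]

lemma seqConv_add_eq_mul (hu : ∀ n < b, u n = 0) (hv : ∀ n < c, v n = 0) :
    seqConv u v (b + c) = u b * v c := by
  rw [seqConv, tsum_eq_single c, add_sub_cancel_right]
  intro n hn
  rcases hn.lt_or_gt with hn | hn
  · rw [hv n hn, mul_zero]
  · rw [hu _ (by lia), zero_mul]

end LowestFrequency

namespace ContinuousPeriodic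

variable {u : ℝ → ℂ} {b : ℤ}

lemma pow (hu : ContinuousPeriodic u) (m : ℕ) : ContinuousPeriodic fun θ => u θ ^ m :=
  ⟨hu.continuous.pow m, hu.periodic.comp (· ^ m)⟩

lemma fCoef_pow_succ (hu : ContinuousPeriodic u) (m : ℕ) :
    fCoef (fun θ => u θ ^ (m + 1)) = seqConv (fCoef fun θ => u θ ^ m) (fCoef u) := by
  simp only [pow_succ]
  exact funext fun n => ((hu.pow m).hasSum_fCoef_mul hu n).tsum_eq.symm

lemma fCoef_pow_eq_zero_of_lt (hu : ContinuousPeriodic u) (hb : ∀ n < b, fCoef u n = 0) (m : ℕ) :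
    ∀ n < m * b, fCoef (fun θ => u θ ^ m) n = 0 := by
  induction m with
  | zero =>
    intro n hn
    simp only [pow_zero]
    rw [fCoef_one, if_neg (by simpa using hn.ne)]
  | succ m ih =>
    intro n hn
    rw [hu.fCoef_pow_succ]
    exact seqConv_eq_zero_of_lt ih hb (by push_cast at hn; linarith)

lemma fCoef_pow_mul_eq_pow (hu : ContinuousPeriodic u) (hb : ∀ n < b, fCoef u n = 0) (m : ℕ) :
    fCoef (fun θ => u θ ^ m) (m * b) = fCoef u b ^ m := by
  induction m with
  | zero => simpa using fCoef_one_zero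
  | succ m ih =>
    rw [hu.fCoef_pow_succ, Nat.cast_succ, add_one_mul,
      seqConv_add_eq_mul (hu.fCoef_pow_eq_zero_of_lt hb m) hb, ih, pow_succ]

-- If `u` has a lowest frequency `b`, then `b < 0` and `u ^ m` has lowest frequency `m * b`;
-- otherwise `u` itself has arbitrarily low frequencies.
lemma exists_fCoef_pow_ne_zero (hu : ContinuousPeriodic u)
    (hneg : ∃ m : ℕ, ∃ n < 0, fCoef (fun θ => u θ ^ m) n ≠ 0) (N : ℤ) :
    ∃ m : ℕ, ∃ n < N, fCoef (fun θ => u θ ^ m) n ≠ 0 := by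
  by_contra! hzero
  obtain ⟨n₀, hn₀, hun₀⟩ : ∃ n < 0, fCoef u n ≠ 0 := by
    by_contra! hnonneg
    obtain ⟨m, n, hn, hne⟩ := hneg
    exact hne (hu.fCoef_pow_eq_zero_of_lt hnonneg m n (by simpa using hn))
  obtain ⟨b, hub, hmin⟩ := Int.exists_least_of_bdd (P := fun n => fCoef u n ≠ 0)
    ⟨N, fun n hn => le_of_not_gt fun hlt => hn (by simpa using hzero 1 n hlt)⟩ ⟨n₀, hun₀⟩
  have hb : b < 0 := (hmin n₀ hun₀).trans_lt hn₀
  have hlow (n : ℤ) (hn : n < b) : fCoef u n = 0 := by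
    by_contra hne
    exact hn.not_ge (hmin n hne)
  have hfar : ((N.natAbs + 1 : ℕ) : ℤ) * b < N := by
    push_cast
    nlinarith [neg_abs_le N, abs_nonneg N]
  exact pow_ne_zero _ hub ((hu.fCoef_pow_mul_eq_pow hlow _).symm.trans (hzero _ _ hfar))

end ContinuousPeriodic

/-! ### The change of variable given by the integrated weight -/

/-- Smooth, `2π`-periodic, positive functions `a` such that `a⁻¹` has mean `1`. -/
structure NormalizedWeight (a : ℝ → ℝ) : Prop where
  contDiff : ContDiff ℝ (⊤ : ℕ∞) a
  periodic : Function.Periodic a (2 * π)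
  pos : ∀ θ, 0 < a θ
  integral_inv : ∫ θ in (0 : ℝ)..2 * π, (a θ)⁻¹ = 2 * π

/-- The function `ψ^l a^s`, where `ψ = e^{iB}`. -/
def psiPowMul (a : ℝ → ℝ) (l : ℤ) (s : ℝ) (θ : ℝ) : ℂ := mode l (Bfun a θ) * (a θ ^ s : ℝ)

lemma conj_psiPowMul (a : ℝ → ℝ) (l : ℤ) (s θ : ℝ) :
    conj (psiPowMul a l s θ) = psiPowMul a (-l) s θ := by
  rw [psiPowMul, psiPowMul, map_mul, conj_mode, Complex.conj_ofReal]

namespace NormalizedWeight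

variable {a : ℝ → ℝ}

lemma contDiff_inv (ha : NormalizedWeight a) : ContDiff ℝ (⊤ : ℕ∞) fun θ => (a θ)⁻¹ :=
  ha.contDiff.inv fun θ => (ha.pos θ).ne'

lemma periodic_inv (ha : NormalizedWeight a) : Function.Periodic (fun θ => (a θ)⁻¹) (2 * π) :=
  ha.periodic.comp _

lemma intervalIntegrable_inv (ha : NormalizedWeight a) (x y : ℝ) :
    IntervalIntegrable (fun θ => (a θ)⁻¹) volume x y :=
  ha.contDiff_inv.continuous.intervalIntegrable x y

lemma hasDerivAt_Bfun (ha : NormalizedWeight a) (θ : ℝ) : HasDerivAt (Bfun a) (a θ)⁻¹ θ :=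
  ha.contDiff_inv.continuous.integral_hasStrictDerivAt 0 θ |>.hasDerivAt

lemma contDiff_Bfun (ha : NormalizedWeight a) : ContDiff ℝ (⊤ : ℕ∞) (Bfun a) := by
  refine contDiff_infty_iff_deriv.2 ⟨fun θ => (ha.hasDerivAt_Bfun θ).differentiableAt, ?_⟩
  rw [funext fun θ => (ha.hasDerivAt_Bfun θ).deriv]
  exact ha.contDiff_inv

lemma Bfun_add_two_pi (ha : NormalizedWeight a) (θ : ℝ) :
    Bfun a (θ + 2 * π) = Bfun a θ + 2 * π := by
  rw [Bfun, Bfun, ← intervalIntegral.integral_add_adjacent_intervals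
    (ha.intervalIntegrable_inv 0 θ) (ha.intervalIntegrable_inv θ _),
    ha.periodic_inv.intervalIntegral_add_eq θ 0, zero_add, ha.integral_inv]

lemma strictMono_Bfun (ha : NormalizedWeight a) : StrictMono (Bfun a) :=
  strictMono_of_hasDerivAt_pos ha.hasDerivAt_Bfun fun θ => inv_pos.2 (ha.pos θ)

lemma surjective_Bfun (ha : NormalizedWeight a) : Function.Surjective (Bfun a) :=
  have hinv (θ : ℝ) : 0 < (a θ)⁻¹ := inv_pos.2 (ha.pos θ)
  ha.contDiff_Bfun.continuous.surjective
    (ha.periodic_inv.tendsto_atTop_intervalIntegral_of_pos' (ha.intervalIntegrable_inv _ _) hinv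
      two_pi_pos)
    (ha.periodic_inv.tendsto_atBot_intervalIntegral_of_pos' (ha.intervalIntegrable_inv _ _) hinv
      two_pi_pos)

/-- The inverse of `B`. -/
def theta (ha : NormalizedWeight a) : ℝ ≃o ℝ :=
  (ha.strictMono_Bfun.orderIsoOfSurjective _ ha.surjective_Bfun).symm

lemma theta_Bfun (ha : NormalizedWeight a) (θ : ℝ) : ha.theta (Bfun a θ) = θ :=
  (ha.strictMono_Bfun.orderIsoOfSurjective _ ha.surjective_Bfun).symm_apply_apply θ

lemma theta_add_two_pi (ha : NormalizedWeight a) (x : ℝ) :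
    ha.theta (x + 2 * π) = ha.theta x + 2 * π := by
  obtain ⟨θ, rfl⟩ := ha.surjective_Bfun x
  rw [← ha.Bfun_add_two_pi, ha.theta_Bfun, ha.theta_Bfun]

lemma continuousPeriodic_comp_theta (ha : NormalizedWeight a) {f : ℝ → ℂ}
    (hf : ContinuousPeriodic f) : ContinuousPeriodic fun x => f (ha.theta x) where
  continuous := hf.continuous.comp ha.theta.continuous
  periodic x := by simp only [ha.theta_add_two_pi, hf.periodic (ha.theta x)]

lemma fCoef_comp_theta (ha : NormalizedWeight a) {f : ℝ → ℂ} (hf : Continuous f) (l : ℤ) :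
    fCoef (fun x => f (ha.theta x)) l = fCoef (fun θ => f θ * psiPowMul a (-l) (-1) θ) 0 := by
  have hG : Continuous fun x => f (ha.theta x) * mode (-l) x :=
    (hf.comp ha.theta.continuous).mul (smoothPeriodic_mode _).contDiff.continuous
  have hsub := intervalIntegral.integral_deriv_smul_comp (a := 0) (b := 2 * π)
    (fun θ _ => ha.hasDerivAt_Bfun θ) ha.contDiff_inv.continuous.continuousOn hG
  have hB0 : Bfun a 0 = 0 := intervalIntegral.integral_same
  have hB2π : Bfun a (2 * π) = 2 * π := ha.integral_inv
  rw [hB0, hB2π] at hsub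
  rw [fCoef_eq_integral_mode, fCoef_eq_integral_mode, ← hsub]
  congr 1
  refine intervalIntegral.integral_congr fun θ _ => ?_
  simp only [Function.comp_apply, ha.theta_Bfun, Complex.real_smul, psiPowMul, rpow_neg_one,
    neg_zero, mode_zero, mul_one]
  ring

lemma psiPowMul_mul (ha : NormalizedWeight a) (k l : ℤ) (s t θ : ℝ) :
    psiPowMul a k s θ * psiPowMul a l t θ = psiPowMul a (k + l) (s + t) θ := by
  simp only [psiPowMul, mode_add, rpow_add (ha.pos θ), Complex.ofReal_mul]
  ring

lemma smoothPeriodic_psiPowMul (ha : NormalizedWeight a) (l : ℤ) (s : ℝ) :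
    SmoothPeriodic (psiPowMul a l s) where
  contDiff := ((smoothPeriodic_mode l).contDiff.comp ha.contDiff_Bfun).mul
    (Complex.ofRealCLM.contDiff.comp (ha.contDiff.rpow_const_of_ne fun θ => (ha.pos θ).ne'))
  periodic θ := by
    rw [psiPowMul, psiPowMul, ha.Bfun_add_two_pi, (smoothPeriodic_mode l).periodic, ha.periodic]

lemma intCast_mul_fCoef_psiPowMul (ha : NormalizedWeight a) (l n : ℤ) :
    n * fCoef (psiPowMul a l 0) n = l * fCoef (psiPowMul a l (-1)) n := by
  have hderiv (θ : ℝ) : HasDerivAt (psiPowMul a l 0)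
      (Complex.I * l * psiPowMul a l (-1) θ) θ := by
    have hpsi : psiPowMul a l 0 = mode l ∘ Bfun a := by
      ext θ
      simp [psiPowMul]
    rw [hpsi]
    convert! (hasDerivAt_mode l (Bfun a θ)).scomp θ (ha.hasDerivAt_Bfun θ) using 1
    rw [psiPowMul, rpow_neg_one, Complex.real_smul]
    ring
  have h := (ha.smoothPeriodic_psiPowMul l 0).fCoef_deriv n
  rw [funext fun θ => (hderiv θ).deriv, fCoef_const_mul, mul_assoc, mul_assoc] at h
  exact (mul_left_cancel₀ Complex.I_ne_zero h).symm

lemma conj_fCoef_psiPowMul (ha : NormalizedWeight a) (l m : ℤ) (s : ℝ) :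
    conj (fCoef (psiPowMul a l s) m) =
      fCoef (fun x => psiPowMul a 0 (s + 1) (ha.theta x) * mode m (ha.theta x)) l := by
  have hprod (θ : ℝ) : psiPowMul a 0 (s + 1) θ * mode m θ * psiPowMul a (-l) (-1) θ =
      psiPowMul a (-l) s θ * mode m θ := by
    rw [mul_right_comm, ha.psiPowMul_mul, zero_add, add_neg_cancel_right]
  rw [ha.fCoef_comp_theta (f := fun θ => psiPowMul a 0 (s + 1) θ * mode m θ)
    ((ha.smoothPeriodic_psiPowMul _ _).mul (smoothPeriodic_mode m)).contDiff.continuous, conj_fCoef]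
  simp only [hprod, conj_psiPowMul, fCoef_mul_mode, zero_sub]

-- In the variable `x = B θ` the functions `ψ^l` become the Fourier modes, so this is Parseval's
-- identity for `a^{s+1} e^{inθ}` and `a^{t+1} e^{imθ}`, expressed in that variable.
lemma hasSum_fCoef_psiPowMul_mul_conj (ha : NormalizedWeight a) (s t : ℝ) (n m : ℤ) :
    HasSum (fun l => fCoef (psiPowMul a l s) n * conj (fCoef (psiPowMul a l t) m))
      (fCoef (psiPowMul a 0 (s + t + 1)) (n - m)) := by
  have hsmooth (r : ℝ) (i : ℤ) : SmoothPeriodic fun θ => psiPowMul a 0 (r + 1) θ * mode i θ :=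
    (ha.smoothPeriodic_psiPowMul _ _).mul (smoothPeriodic_mode i)
  have parseval :=
    (ha.continuousPeriodic_comp_theta (hsmooth t m).continuousPeriodic).hasSum_fCoef_mul_conj
      (ha.continuousPeriodic_comp_theta (hsmooth s n).continuousPeriodic)
  have total := ha.fCoef_comp_theta (f := fun θ => psiPowMul a 0 (t + 1) θ * mode m θ *
    conj (psiPowMul a 0 (s + 1) θ * mode n θ))
    ((hsmooth t m).continuousPeriodic.mul (hsmooth s n).continuousPeriodic.star).continuous 0
  have hprod (θ : ℝ) : psiPowMul a 0 (t + 1) θ * mode m θ *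
      conj (psiPowMul a 0 (s + 1) θ * mode n θ) * psiPowMul a (-0) (-1) θ =
      psiPowMul a 0 (s + t + 1) θ * mode (m - n) θ := by
    rw [map_mul, mul_mul_mul_comm, mode_mul_conj_mode, mul_right_comm, conj_psiPowMul,
      ha.psiPowMul_mul, ha.psiPowMul_mul]
    ring_nf
  simp only [hprod, fCoef_mul_mode, zero_sub, neg_sub] at total
  rw [total] at parseval
  simp only [← ha.conj_fCoef_psiPowMul, Complex.conj_conj] at parseval
  exact parseval.congr_fun fun l => mul_comm _ _

end NormalizedWeight

/-! ### The zeta-invariant as a sum over the powers of `ψ` -/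

lemma hasSum_tsum_mul {R X L : Type*} [NormedRing R] [CompleteSpace R] {w δ : X → R}
    {g : X → L → R} {C : ℝ} (hw : Summable fun x => ‖w x‖) (hg : ∀ x, HasSum (g x) (δ x))
    (hnorm : ∀ x, Summable fun l => ‖g x l‖) (hC : ∀ x, ∑' l, ‖g x l‖ ≤ C) :
    HasSum (fun l => ∑' x, w x * g x l) (∑' x, w x * δ x) := by
  have hle (x : X) (l : L) : ‖w x * g x l‖ ≤ ‖w x‖ * ‖g x l‖ := norm_mul_le _ _
  have hdom : Summable fun p : X × L => ‖w p.1‖ * ‖g p.1 p.2‖ := by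
    refine (summable_prod_of_nonneg fun p => by positivity).2
      ⟨fun x => (hnorm x).mul_left ‖w x‖, ?_⟩
    simp only [tsum_mul_left]
    exact .of_nonneg_of_le
      (fun x => mul_nonneg (norm_nonneg _) (tsum_nonneg fun _ => norm_nonneg _))
      (fun x => mul_le_mul_of_nonneg_left (hC x) (norm_nonneg _)) (hw.mul_right C)
  have hsum : Summable fun p : X × L => w p.1 * g p.1 p.2 :=
    hdom.of_norm_bounded fun p => hle p.1 p.2
  have htotal : ∑' x, w x * δ x = ∑' p : X × L, w p.1 * g p.1 p.2 := by
    rw [hsum.tsum_prod]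
    exact tsum_congr fun x => ((hg x).mul_left (w x)).tsum_eq.symm
  have hswap : HasSum (fun p : L × X => w p.2 * g p.2 p.1) (∑' x, w x * δ x) :=
    htotal ▸ (Equiv.prodComm L X).hasSum_iff.2 hsum.hasSum
  exact hswap.prod_fiberwise fun l => (hswap.summable.prod_factor l).hasSum

namespace NormalizedWeight

open rapidlyDecreasing

variable {a : ℝ → ℝ}

lemma exists_tsum_norm_fCoef_psiPowMul_le (ha : NormalizedWeight a) (s t : ℝ) :
    ∃ C, ∀ n m : ℤ,
      Summable (fun l => ‖fCoef (psiPowMul a l s) n * conj (fCoef (psiPowMul a l t) m)‖) ∧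
      ∑' l, ‖fCoef (psiPowMul a l s) n * conj (fCoef (psiPowMul a l t) m)‖ ≤ C := by
  have hsq (r : ℝ) (i : ℤ) : HasSum (fun l => ‖fCoef (psiPowMul a l r) i‖ ^ 2)
      (fCoef (psiPowMul a 0 (r + r + 1)) 0).re := by
    have h := Complex.hasSum_re (ha.hasSum_fCoef_psiPowMul_mul_conj r r i i)
    simpa only [Complex.mul_conj', ← Complex.ofReal_pow, Complex.ofReal_re, sub_self] using h
  refine ⟨(fCoef (psiPowMul a 0 (s + s + 1)) 0).re + (fCoef (psiPowMul a 0 (t + t + 1)) 0).re,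
    fun n m => ?_⟩
  have hle (l : ℤ) : ‖fCoef (psiPowMul a l s) n * conj (fCoef (psiPowMul a l t) m)‖ ≤
      ‖fCoef (psiPowMul a l s) n‖ ^ 2 + ‖fCoef (psiPowMul a l t) m‖ ^ 2 := by
    rw [norm_mul, RCLike.norm_conj]
    nlinarith [sq_nonneg (‖fCoef (psiPowMul a l s) n‖ - ‖fCoef (psiPowMul a l t) m‖),
      sq_nonneg ‖fCoef (psiPowMul a l s) n‖, sq_nonneg ‖fCoef (psiPowMul a l t) m‖]
  have hdom := (hsq s n).add (hsq t m)
  have hsum := Summable.of_nonneg_of_le (fun _ => norm_nonneg _) hle hdom.summable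
  exact ⟨hsum, hasSum_le hle hsum.hasSum hdom⟩

/-- The vector of Fourier coefficients of `ψ^l a^s`. -/
def psiVec (ha : NormalizedWeight a) (l : ℤ) (s : ℝ) : rapidlyDecreasing :=
  (ha.smoothPeriodic_psiPowMul l s).coeffs

lemma psiVec_apply (ha : NormalizedWeight a) (l n : ℤ) (s : ℝ) :
    ha.psiVec l s n = fCoef (psiPowMul a l s) n := rfl

/-- The Fourier side of multiplication by `a^s`. -/
def mulOp (ha : NormalizedWeight a) (s : ℝ) : rapidlyDecreasing →ₗ[ℂ] rapidlyDecreasing :=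
  convOp (ha.psiVec 0 s)

lemma mulOp_psiVec (ha : NormalizedWeight a) (l : ℤ) (s t : ℝ) :
    ha.mulOp s (ha.psiVec l t) = ha.psiVec l (s + t) :=
  SmoothPeriodic.convOp_coeffs _ _ _ fun θ => by rw [ha.psiPowMul_mul, zero_add]

lemma mulOp_add (ha : NormalizedWeight a) (s t : ℝ) :
    ha.mulOp (s + t) = ha.mulOp s * ha.mulOp t := by
  rw [mulOp, ← mulOp_psiVec, mulOp, convOp_convOp, ← mulOp, ← mulOp]

lemma isSymmetric_mulOp (ha : NormalizedWeight a) (s : ℝ) : (ha.mulOp s).IsSymmetric :=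
  isSymmetric_convOp fun n => by
    simp only [psiVec_apply, conj_fCoef, conj_psiPowMul, neg_zero]

lemma freqOp_psiVec (ha : NormalizedWeight a) (l : ℤ) :
    freqOp (ha.psiVec l 0) = (l : ℂ) • ha.psiVec l (-1) :=
  rapidlyDecreasing.ext fun n => ha.intCast_mul_fCoef_psiPowMul l n

lemma inner_psiVec (ha : NormalizedWeight a) (l : ℤ) {s t : ℝ} (hst : s + t = -1) :
    ⟪ha.psiVec l s, ha.psiVec l t⟫_ℂ = 1 := by
  have hmean := ha.fCoef_comp_theta (f := fun _ => 1) continuous_const 0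
  rw [psiVec, psiVec, SmoothPeriodic.inner_coeffs]
  simp only [conj_psiPowMul, ha.psiPowMul_mul, add_neg_cancel, add_comm t, hst]
  simpa only [one_mul, neg_zero, fCoef_one_zero] using hmean.symm

lemma norm_psiVec_neg_half (ha : NormalizedWeight a) (l : ℤ) : ‖ha.psiVec l (-(1 / 2))‖ = 1 := by
  rw [norm_eq_sqrt_re_inner (𝕜 := ℂ), ha.inner_psiVec l (by norm_num)]
  simp

/-- The Fourier side of `√a |D| √a`. -/
def sqrtAbsFreqSqrt (ha : NormalizedWeight a) : rapidlyDecreasing →ₗ[ℂ] rapidlyDecreasing :=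
  ha.mulOp (1 / 2) * (absFreqOp * ha.mulOp (1 / 2))

lemma isSymmetric_sqrtAbsFreqSqrt (ha : NormalizedWeight a) : ha.sqrtAbsFreqSqrt.IsSymmetric := by
  intro u v
  simp only [sqrtAbsFreqSqrt, Module.End.mul_apply]
  rw [ha.isSymmetric_mulOp, absFreqOp, isSymmetric_weightOp, ha.isSymmetric_mulOp]

lemma mulOp_freqOp_pow_psiVec (ha : NormalizedWeight a) (l : ℤ) (m : ℕ) :
    ((ha.mulOp 1 * freqOp) ^ m) (ha.psiVec l 0) = (l : ℂ) ^ m • ha.psiVec l 0 := by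
  induction m with
  | zero => simp
  | succ m ih =>
    rw [pow_succ, Module.End.mul_apply, Module.End.mul_apply, ha.freqOp_psiVec, map_smul,
      ha.mulOp_psiVec, add_neg_cancel, map_smul, ih, smul_smul, pow_succ']

lemma mulOp_half_psiVec (ha : NormalizedWeight a) (l : ℤ) :
    ha.mulOp (1 / 2) (ha.psiVec l (-(1 / 2))) = ha.psiVec l 0 := by
  rw [ha.mulOp_psiVec, add_neg_cancel]

lemma mulOp_absFreqOp_pow_psiVec (ha : NormalizedWeight a) (l : ℤ) (m : ℕ) :
    ((ha.mulOp 1 * absFreqOp) ^ m) (ha.psiVec l 0) =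
      ha.mulOp (1 / 2) ((ha.sqrtAbsFreqSqrt ^ m) (ha.psiVec l (-(1 / 2)))) := by
  have hfactor : ha.mulOp 1 = ha.mulOp (1 / 2) * ha.mulOp (1 / 2) := by
    rw [← ha.mulOp_add, add_halves]
  rw [← ha.mulOp_half_psiVec, ← Module.End.mul_apply, ← Module.End.mul_apply, hfactor, mul_assoc,
    mul_pow_mul, sqrtAbsFreqSqrt, mul_assoc]

lemma inner_mulOp_absFreqOp_pow (ha : NormalizedWeight a) (l : ℤ) (k : ℕ) :
    ⟪ha.psiVec l (-1), ((ha.mulOp 1 * absFreqOp) ^ (2 * k)) (ha.psiVec l 0)⟫_ℂ =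
      ‖(ha.sqrtAbsFreqSqrt ^ k) (ha.psiVec l (-(1 / 2)))‖ ^ 2 := by
  rw [ha.mulOp_absFreqOp_pow_psiVec, ← ha.isSymmetric_mulOp, ha.mulOp_psiVec, two_mul, pow_add,
    Module.End.mul_apply, ← ha.isSymmetric_sqrtAbsFreqSqrt.pow k]
  norm_num [inner_self_eq_norm_sq_to_K]

lemma inner_mulOp_freqOp_pow (ha : NormalizedWeight a) (l : ℤ) (m : ℕ) :
    ⟪ha.psiVec l (-1), ((ha.mulOp 1 * freqOp) ^ m) (ha.psiVec l 0)⟫_ℂ = (l : ℂ) ^ m := by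
  rw [ha.mulOp_freqOp_pow_psiVec]
  refine (inner_smul_right (ha.psiVec l (-1)) (ha.psiVec l 0) _).trans ?_
  rw [ha.inner_psiVec l (by norm_num), mul_one]

lemma hasSum_zetaInv (ha : NormalizedWeight a) (k : ℕ) :
    HasSum
      (fun l : ℤ => ‖(ha.sqrtAbsFreqSqrt ^ k) (ha.psiVec l (-(1 / 2)))‖ ^ 2 - (l : ℝ) ^ (2 * k))
      (ZetaInv k a).re := by
  have hone : psiPowMul a 0 1 = fun θ => (a θ : ℂ) := by
    ext θ
    simp [psiPowMul, mode_zero]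
  have hzero : psiPowMul a 0 0 = fun _ => 1 := by
    ext θ
    simp [psiPowMul, mode_zero]
  have hdecay : RapidDecay (fCoef fun θ => (a θ : ℂ)) := hone ▸ (ha.psiVec 0 1).2
  obtain ⟨C, hC⟩ := ha.exists_tsum_norm_fCoef_psiPowMul_le 0 (-1)
  have h := hasSum_tsum_mul (summable_zetaWeight hdecay (even_two_mul k)).norm
    (fun p => ha.hasSum_fCoef_psiPowMul_mul_conj 0 (-1) p.1 (p.1 + ∑ i, p.2 i))
    (fun p => (hC _ _).1) (fun p => (hC _ _).2)
  have hterm (l : ℤ) : ∑' p : ℤ × (Fin (2 * k) → ℤ),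
      zetaWeight (fCoef fun θ => (a θ : ℂ)) (2 * k) p * (fCoef (psiPowMul a l 0) p.1 *
        conj (fCoef (psiPowMul a l (-1)) (p.1 + ∑ i, p.2 i))) =
      ((‖(ha.sqrtAbsFreqSqrt ^ k) (ha.psiVec l (-(1 / 2)))‖ ^ 2 - (l : ℝ) ^ (2 * k) : ℝ) : ℂ) := by
    rw [← hone]
    refine (hasSum_zetaWeight_mul (ha.psiVec 0 1) (ha.psiVec l 0) (ha.psiVec l (-1))
      (2 * k)).tsum_eq.trans ?_
    rw [← mulOp, ha.inner_mulOp_absFreqOp_pow, ha.inner_mulOp_freqOp_pow]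
    push_cast
    rfl
  simp only [hterm, zero_add, neg_add_cancel, hzero, fCoef_one, sub_add_cancel_left, neg_eq_zero,
    ← zetaInv_eq_tsum_zetaWeight hdecay] at h
  simpa only [Complex.ofReal_re] using Complex.hasSum_re h

end NormalizedWeight

/-! ### Exponential growth -/

lemma sub_mul_pow_le_pow_succ_sub {x y : ℝ} (hx : 0 ≤ x) (hxy : x ≤ y) (j : ℕ) :
    (y - x) * x ^ j ≤ y ^ (j + 1) - x ^ (j + 1) := by
  have hpow : x ^ j ≤ y ^ j := pow_le_pow_left₀ hx hxy j
  calc (y - x) * x ^ j = y * x ^ j - x ^ (j + 1) := by ring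
    _ ≤ y * y ^ j - x ^ (j + 1) := by gcongr; exact hx.trans hxy
    _ = y ^ (j + 1) - x ^ (j + 1) := by ring

lemma exists_mul_exp_le_pow_sub_pow {x y : ℝ} (hx : 0 ≤ x) (hxy : x < y) {α : ℝ}
    (hα : exp α ≤ x) : ∃ C > 0, ∀ k : ℕ, 1 ≤ k → C * exp (α * k) ≤ y ^ k - x ^ k := by
  refine ⟨(y - x) * exp (-α), mul_pos (sub_pos.2 hxy) (exp_pos _), fun k hk => ?_⟩
  obtain ⟨j, rfl⟩ := Nat.exists_eq_add_of_le' hk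
  calc (y - x) * exp (-α) * exp (α * (j + 1 : ℕ)) = (y - x) * exp α ^ j := by
        rw [mul_assoc, ← exp_add, ← exp_nat_mul]
        push_cast
        ring_nf
    _ ≤ (y - x) * x ^ j := by
        have := sub_pos.2 hxy
        gcongr
    _ ≤ y ^ (j + 1) - x ^ (j + 1) := sub_mul_pow_le_pow_succ_sub hx hxy.le j

namespace NormalizedWeight

open rapidlyDecreasing

variable {a : ℝ → ℝ}

/-- The expectation `⟨|D| ψ^l, ψ^l⟩` of `|D|` in the state `ψ^l`. -/
def absFreqMean (ha : NormalizedWeight a) (l : ℤ) : ℝ :=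
  (⟪absFreqOp (ha.psiVec l 0), ha.psiVec l 0⟫_ℂ).re

lemma re_inner_freqOp_psiVec (ha : NormalizedWeight a) (l : ℤ) :
    (⟪freqOp (ha.psiVec l 0), ha.psiVec l 0⟫_ℂ).re = l := by
  rw [ha.freqOp_psiVec]
  refine (congrArg Complex.re (inner_smul_left (ha.psiVec l (-1)) (ha.psiVec l 0) _)).trans ?_
  rw [ha.inner_psiVec l (by norm_num)]
  simp

lemma abs_le_absFreqMean (ha : NormalizedWeight a) (l : ℤ) : |(l : ℝ)| ≤ ha.absFreqMean l := by
  simpa only [ha.re_inner_freqOp_psiVec, absFreqMean] using abs_inner_freqOp_le (ha.psiVec l 0)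

lemma lt_absFreqMean (ha : NormalizedWeight a) {l m : ℤ} (hm : m < 0)
    (hne : fCoef (psiPowMul a l 0) m ≠ 0) : l < ha.absFreqMean l := by
  simpa only [ha.re_inner_freqOp_psiVec, absFreqMean] using
    inner_freqOp_lt (u := ha.psiVec l 0) hm hne

lemma absFreqMean_pow_le (ha : NormalizedWeight a) (l : ℤ) (k : ℕ) :
    ha.absFreqMean l ^ k ≤ ‖(ha.sqrtAbsFreqSqrt ^ k) (ha.psiVec l (-(1 / 2)))‖ := by
  have hmean : ha.absFreqMean l =
      (⟪ha.sqrtAbsFreqSqrt (ha.psiVec l (-(1 / 2))), ha.psiVec l (-(1 / 2))⟫_ℂ).re := by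
    simp only [sqrtAbsFreqSqrt, Module.End.mul_apply, absFreqMean]
    rw [ha.isSymmetric_mulOp, ha.mulOp_half_psiVec]
  refine le_trans ?_ (norm_inner_apply_self_pow_le (𝕜 := ℂ) ha.isSymmetric_sqrtAbsFreqSqrt
    (ha.norm_psiVec_neg_half l) k)
  gcongr
  · exact (abs_nonneg _).trans (ha.abs_le_absFreqMean l)
  · exact hmean.trans_le (Complex.re_le_norm _)

lemma absFreqMean_pow_sub_le_zetaInv (ha : NormalizedWeight a) (l : ℤ) (k : ℕ) :
    (ha.absFreqMean l ^ 2) ^ k - ((l : ℝ) ^ 2) ^ k ≤ (ZetaInv k a).re := by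
  have hterm (l : ℤ) : (ha.absFreqMean l ^ 2) ^ k - ((l : ℝ) ^ 2) ^ k ≤
      ‖(ha.sqrtAbsFreqSqrt ^ k) (ha.psiVec l (-(1 / 2)))‖ ^ 2 - (l : ℝ) ^ (2 * k) := by
    have hmean := (abs_nonneg _).trans (ha.abs_le_absFreqMean l)
    rw [pow_right_comm, ← pow_mul (l : ℝ)]
    gcongr
    exact ha.absFreqMean_pow_le l k
  refine (hterm l).trans (le_hasSum (ha.hasSum_zetaInv k) l fun i _ => le_trans ?_ (hterm i))
  rw [sub_nonneg, ← sq_abs (i : ℝ)]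
  gcongr
  exact ha.abs_le_absFreqMean i

lemma fCoef_mode_one_comp_theta_pow (ha : NormalizedWeight a) (m : ℕ) (l : ℤ) :
    fCoef (fun x => mode 1 (ha.theta x) ^ m) l = fCoef (psiPowMul a (-l) (-1)) (-m) := by
  have hpow (θ : ℝ) : mode 1 θ ^ m = mode m θ := by
    simp [mode, ← Complex.exp_nat_mul, mul_left_comm, mul_assoc]
  rw [ha.fCoef_comp_theta (f := fun θ => mode 1 θ ^ m)
    ((smoothPeriodic_mode 1).contDiff.continuous.pow m)]
  simp only [hpow, mul_comm (mode _ _), fCoef_mul_mode, zero_sub]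

lemma fCoef_psiPowMul_neg_one_ne_zero_iff (ha : NormalizedWeight a) {l n : ℤ} (hl : l ≠ 0) :
    fCoef (psiPowMul a l (-1)) n ≠ 0 ↔ n ≠ 0 ∧ fCoef (psiPowMul a l 0) n ≠ 0 := by
  have h : (l * fCoef (psiPowMul a l (-1)) n ≠ 0) ↔ (n * fCoef (psiPowMul a l 0) n ≠ 0) := by
    rw [ha.intCast_mul_fCoef_psiPowMul]
  simpa only [mul_ne_zero_iff, ne_eq, Int.cast_eq_zero, hl, not_false_eq_true, true_and] using h

lemma exists_gt_fCoef_psiPowMul_ne_zero (ha : NormalizedWeight a)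
    (hneg : ∃ m < 0, fCoef (psiPowMul a 1 0) m ≠ 0) {N : ℤ} (hN : 0 ≤ N) :
    ∃ l > N, ∃ m < 0, fCoef (psiPowMul a l 0) m ≠ 0 := by
  obtain ⟨n, hn, hne⟩ := hneg
  have hstart : fCoef (fun x => mode 1 (ha.theta x) ^ n.natAbs) (-1) ≠ 0 := by
    rw [ha.fCoef_mode_one_comp_theta_pow, neg_neg, Int.ofNat_natAbs_of_nonpos hn.le, neg_neg]
    exact (ha.fCoef_psiPowMul_neg_one_ne_zero_iff one_ne_zero).2 ⟨hn.ne, hne⟩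
  have hmode := ha.continuousPeriodic_comp_theta (smoothPeriodic_mode 1).continuousPeriodic
  obtain ⟨m, l, hl, hml⟩ :=
    hmode.exists_fCoef_pow_ne_zero ⟨n.natAbs, -1, by norm_num, hstart⟩ (-N)
  rw [ha.fCoef_mode_one_comp_theta_pow, ha.fCoef_psiPowMul_neg_one_ne_zero_iff (by lia)] at hml
  exact ⟨-l, by lia, -m, by lia, hml.2⟩

end NormalizedWeight

/-- **Theorem 1.2′ specialized to even negative integers.** If `a` is smooth, `2π`-periodic,
positive, normalized by `∫₀^{2π} a⁻¹ = 2π`, and not conformally equivalent to `1`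
(i.e. `ψ̂(k) ≠ 0` for some `k < 0`, where `ψ = e^{iB}`), then for every `α > 0` there is
`C > 0` with `Z_k(a) ≥ C e^{αk}` for all `k ≥ 1`. -/
theorem zetaInv_exponential_growth
    (a : ℝ → ℝ) (ha : ContDiff ℝ (⊤ : ℕ∞) a) (haper : Function.Periodic a (2 * Real.pi))
    (hapos : ∀ θ, 0 < a θ)
    (hnorm : (∫ θ in (0:ℝ)..(2 * Real.pi), (a θ)⁻¹) = 2 * Real.pi)
    (hneg : ∃ k : ℤ, k < 0 ∧
      fCoef (fun θ => Complex.exp (Complex.I * Bfun a θ)) k ≠ 0) :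
    ∀ α : ℝ, 0 < α → ∃ C : ℝ, 0 < C ∧
      ∀ k : ℕ, 1 ≤ k → C * Real.exp (α * k) ≤ (ZetaInv k a).re := by
  intro α _
  have hw : NormalizedWeight a := ⟨ha, haper, hapos, hnorm⟩
  have hpsi : psiPowMul a 1 0 = fun θ => Complex.exp (Complex.I * Bfun a θ) := by
    ext θ
    simp [psiPowMul, mode]
  obtain ⟨l, hl, m, hm, hne⟩ :=
    hw.exists_gt_fCoef_psiPowMul_ne_zero (hpsi ▸ hneg) (Int.natCast_nonneg ⌈exp α⌉₊)
  have hexp : exp α < l := (Nat.le_ceil _).trans_lt (by exact_mod_cast hl)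
  have hl1 : 1 ≤ (l : ℝ) := by exact_mod_cast (Int.natCast_nonneg _).trans_lt hl
  have hlt : (l : ℝ) ^ 2 < hw.absFreqMean l ^ 2 := by
    gcongr
    exact hw.lt_absFreqMean hm hne
  obtain ⟨C, hC, hgrowth⟩ := exists_mul_exp_le_pow_sub_pow (sq_nonneg _) hlt
    (hexp.le.trans (le_self_pow₀ hl1 two_ne_zero))
  exact ⟨C, hC, fun k hk => (hgrowth k hk).trans (hw.absFreqMean_pow_sub_le_zetaInv l k)⟩
end
end
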